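/- arXiv:1402.2576 — 4 statements merged into one kernel-verified Lean document; each statement's English description precedes it below -/
import Mathlib

section
/- For every continuously differentiable, compactly supported function u : ℝ² → ℝ, the square of its L⁴ norm is bounded by twice the product of its L² norm and the L² norm of its gradient: (∫_{ℝ²} u⁴ dxdy)^{1/2} ≤ 2 (∫_{ℝ²} u² dxdy)^{1/2} (∫_{ℝ²} (u_x² + u_y²) dxdy)^{1/2}. -/
open MeasureTheory Real

/-- Partial derivative with respect to the first coordinate. -/
noncomputable def pdx (u : ℝ × ℝ → ℝ) : ℝ × ℝ → ℝ :=
  fun p => deriv (fun x => u (x, p.2)) p.1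

/-- Partial derivative with respect to the second coordinate. -/
noncomputable def pdy (u : ℝ × ℝ → ℝ) : ℝ × ℝ → ℝ :=
  fun p => deriv (fun y => u (p.1, y)) p.2

/-!
Along each coordinate line a compactly supported `v` is bounded by the integral of its partial
derivative, so `‖v (x, y)‖ ^ 2` is at most a function of `y` times a function of `x`, and Fubini
gives Gagliardo's inequality `∫ ‖v‖ ^ 2 ≤ (∫ ‖∂₁ v‖) (∫ ‖∂₂ v‖)`. For `v = ‖u‖ ^ 2` we have
`‖∂ᵢ v‖ ≤ 2 ‖u‖ ‖∂ᵢ u‖`, and the Cauchy–Schwarz inequality bounds each factor on the right.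
-/

theorem pdx_eq_fderiv {u : ℝ × ℝ → ℝ} {p : ℝ × ℝ} (hu : DifferentiableAt ℝ u p) :
    pdx u p = fderiv ℝ u p (1, 0) :=
  (hu.hasFDerivAt.comp_hasDerivAt p.1
    ((hasDerivAt_id p.1).prodMk (hasDerivAt_const p.1 p.2))).deriv

theorem pdy_eq_fderiv {u : ℝ × ℝ → ℝ} {p : ℝ × ℝ} (hu : DifferentiableAt ℝ u p) :
    pdy u p = fderiv ℝ u p (0, 1) :=
  (hu.hasFDerivAt.comp_hasDerivAt p.2
    ((hasDerivAt_const p.2 p.1).prodMk (hasDerivAt_id p.2))).deriv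

section Integral

variable {α β : Type*} [MeasurableSpace α] [MeasurableSpace β] {μ : Measure α} {ν : Measure β}

theorem integral_norm_mul_norm_le_sqrt_mul_sqrt {E F : Type*} [NormedAddCommGroup E]
    [NormedAddCommGroup F] {f : α → E} {g : α → F} (hf : MemLp f 2 μ) (hg : MemLp g 2 μ) :
    ∫ a, ‖f a‖ * ‖g a‖ ∂μ ≤ √(∫ a, ‖f a‖ ^ 2 ∂μ) * √(∫ a, ‖g a‖ ^ 2 ∂μ) := by
  simpa [sqrt_eq_rpow] using
    integral_mul_norm_le_Lp_mul_Lq (f := (‖f ·‖)) (g := (‖g ·‖)) HolderConjugate.two_two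
      (by simpa using hf.norm) (by simpa using hg.norm)

section Marginals

variable [SFinite μ] [SFinite ν] {𝕜 : Type*} [RCLike 𝕜] {f g : α × β → 𝕜}

theorem integrable_prod_integral_mul_integral (hf : Integrable f (μ.prod ν))
    (hg : Integrable g (μ.prod ν)) :
    Integrable (fun p : α × β => (∫ x, f (x, p.2) ∂μ) * ∫ y, g (p.1, y) ∂ν) (μ.prod ν) := by
  simpa only [mul_comm] using hg.integral_prod_left.mul_prod hf.integral_prod_right

theorem integral_prod_integral_mul_integral (hf : Integrable f (μ.prod ν))
    (hg : Integrable g (μ.prod ν)) :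
    ∫ p : α × β, (∫ x, f (x, p.2) ∂μ) * ∫ y, g (p.1, y) ∂ν ∂μ.prod ν =
      (∫ p, f p ∂μ.prod ν) * ∫ p, g p ∂μ.prod ν := by
  rw [integral_prod_symm f hf, integral_prod g hg, mul_comm, ← integral_prod_mul]
  simp only [mul_comm]

end Marginals

end Integral

section Line

variable {F : Type*} [NormedAddCommGroup F] [NormedSpace ℝ F]

theorem norm_le_integral_norm_deriv {f : ℝ → F} (hf : ContDiff ℝ 1 f)
    (hsupp : HasCompactSupport f) (x : ℝ) : ‖f x‖ ≤ ∫ t, ‖deriv f t‖ := by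
  have hint : Integrable (deriv f) :=
    (hf.continuous_deriv le_rfl).integrable_of_hasCompactSupport hsupp.deriv
  rw [← ENNReal.ofReal_le_ofReal_iff (by positivity), ofReal_norm,
    ofReal_integral_norm_eq_lintegral_enorm hint]
  exact (hsupp.enorm_le_lintegral_Ici_deriv hf x).trans (setLIntegral_le_lintegral _ _)

theorem norm_le_integral_norm_fderiv_line {E : Type*} [NormedAddCommGroup E] [NormedSpace ℝ E]
    {v : E → F} (hv : ContDiff ℝ 1 v) (hsupp : HasCompactSupport v) (a : E) {w : E} (hw : w ≠ 0)
    (t : ℝ) : ‖v (a + t • w)‖ ≤ ∫ s : ℝ, ‖fderiv ℝ v (a + s • w) w‖ := by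
  have hderiv (s : ℝ) : deriv (fun t : ℝ => v (a + t • w)) s = fderiv ℝ v (a + s • w) w := by
    have hline : HasDerivAt (fun t : ℝ => a + t • w) w s := by
      simpa using ((hasDerivAt_id s).smul_const w).const_add a
    exact ((hv.differentiable one_ne_zero _).hasFDerivAt.comp_hasDerivAt s hline).deriv
  have hembed : Topology.IsClosedEmbedding fun t : ℝ => a + t • w :=
    (Homeomorph.addLeft a).isClosedEmbedding.comp (isClosedEmbedding_smul_left hw)
  simpa only [hderiv] using norm_le_integral_norm_deriv (f := fun t : ℝ => v (a + t • w))
    (by fun_prop) (hsupp.comp_isClosedEmbedding hembed) t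

theorem norm_sq_le_integral_norm_fderiv_mul {v : ℝ × ℝ → F} (hv : ContDiff ℝ 1 v)
    (hsupp : HasCompactSupport v) (p : ℝ × ℝ) :
    ‖v p‖ ^ 2 ≤
      (∫ x : ℝ, ‖fderiv ℝ v (x, p.2) (1, 0)‖) * ∫ y : ℝ, ‖fderiv ℝ v (p.1, y) (0, 1)‖ := by
  have hx : ‖v p‖ ≤ ∫ x : ℝ, ‖fderiv ℝ v (x, p.2) (1, 0)‖ := by
    simpa using norm_le_integral_norm_fderiv_line hv hsupp (0, p.2) (w := (1, 0)) (by simp) p.1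
  have hy : ‖v p‖ ≤ ∫ y : ℝ, ‖fderiv ℝ v (p.1, y) (0, 1)‖ := by
    simpa using norm_le_integral_norm_fderiv_line hv hsupp (p.1, 0) (w := (0, 1)) (by simp) p.2
  rw [sq]
  gcongr

theorem integral_norm_sq_le_integral_norm_fderiv_mul {v : ℝ × ℝ → F} (hv : ContDiff ℝ 1 v)
    (hsupp : HasCompactSupport v) :
    ∫ p, ‖v p‖ ^ 2 ≤ (∫ p, ‖fderiv ℝ v p (1, 0)‖) * ∫ p, ‖fderiv ℝ v p (0, 1)‖ := by
  have hint (w : ℝ × ℝ) : Integrable fun p => ‖fderiv ℝ v p w‖ :=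
    (Continuous.integrable_of_hasCompactSupport (by fun_prop) (hsupp.fderiv_apply ℝ w)).norm
  calc ∫ p, ‖v p‖ ^ 2
      ≤ ∫ p : ℝ × ℝ,
          (∫ x : ℝ, ‖fderiv ℝ v (x, p.2) (1, 0)‖) * ∫ y : ℝ, ‖fderiv ℝ v (p.1, y) (0, 1)‖ :=
        integral_mono_of_nonneg (.of_forall fun _ => by positivity)
          (integrable_prod_integral_mul_integral (hint _) (hint _))
          (.of_forall (norm_sq_le_integral_norm_fderiv_mul hv hsupp))
    _ = _ := integral_prod_integral_mul_integral (hint _) (hint _)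

end Line

section NormSq

variable {E F : Type*} [NormedAddCommGroup E] [NormedSpace ℝ E] [NormedAddCommGroup F]
  [InnerProductSpace ℝ F] {u : E → F}

theorem norm_fderiv_norm_sq_apply_le {p : E} (hu : DifferentiableAt ℝ u p) (w : E) :
    ‖fderiv ℝ (fun q => ‖u q‖ ^ 2) p w‖ ≤ 2 * (‖u p‖ * ‖fderiv ℝ u p w‖) := by
  rw [hu.hasFDerivAt.norm_sq.fderiv]
  simpa using norm_inner_le_norm (𝕜 := ℝ) (u p) (fderiv ℝ u p w)

theorem integral_norm_fderiv_norm_sq_le [MeasurableSpace E] [OpensMeasurableSpace E]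
    {μ : Measure E} [IsFiniteMeasureOnCompacts μ] (hu : ContDiff ℝ 1 u)
    (hsupp : HasCompactSupport u) (w : E) :
    ∫ p, ‖fderiv ℝ (fun q => ‖u q‖ ^ 2) p w‖ ∂μ ≤
      2 * (√(∫ p, ‖u p‖ ^ 2 ∂μ) * √(∫ p, ‖fderiv ℝ u p w‖ ^ 2 ∂μ)) := by
  have hcont : Continuous fun p => fderiv ℝ u p w := by fun_prop
  have hmem : MemLp u 2 μ := hu.continuous.memLp_of_hasCompactSupport hsupp
  have hmem_fderiv : MemLp (fun p => fderiv ℝ u p w) 2 μ :=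
    hcont.memLp_of_hasCompactSupport (hsupp.fderiv_apply ℝ w)
  calc ∫ p, ‖fderiv ℝ (fun q => ‖u q‖ ^ 2) p w‖ ∂μ
      ≤ ∫ p, 2 * (‖u p‖ * ‖fderiv ℝ u p w‖) ∂μ :=
        integral_mono_of_nonneg (.of_forall fun _ => norm_nonneg _)
          ((hmem.norm.integrable_mul hmem_fderiv.norm).const_mul 2)
          (.of_forall fun p =>
            norm_fderiv_norm_sq_apply_le (hu.differentiable one_ne_zero p) w)
    _ = 2 * ∫ p, ‖u p‖ * ‖fderiv ℝ u p w‖ ∂μ := integral_const_mul ..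
    _ ≤ _ := by
        gcongr
        exact integral_norm_mul_norm_le_sqrt_mul_sqrt hmem hmem_fderiv

end NormSq

section Ladyzhenskaya

variable {F : Type*} [NormedAddCommGroup F] [InnerProductSpace ℝ F] {u : ℝ × ℝ → F}

theorem integral_norm_pow_four_le (hu : ContDiff ℝ 1 u) (hsupp : HasCompactSupport u) :
    ∫ p, ‖u p‖ ^ 4 ≤
      2 * (√(∫ p, ‖u p‖ ^ 2) * √(∫ p, ‖fderiv ℝ u p (1, 0)‖ ^ 2)) *
        (2 * (√(∫ p, ‖u p‖ ^ 2) * √(∫ p, ‖fderiv ℝ u p (0, 1)‖ ^ 2))) := by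
  have hsupp_sq : HasCompactSupport fun p => ‖u p‖ ^ 2 :=
    hsupp.norm.comp_left (g := fun r : ℝ => r ^ 2) (by simp)
  calc ∫ p, ‖u p‖ ^ 4 = ∫ p, ‖‖u p‖ ^ 2‖ ^ 2 := by simp [← pow_mul]
    _ ≤ (∫ p, ‖fderiv ℝ (fun q => ‖u q‖ ^ 2) p (1, 0)‖) *
          ∫ p, ‖fderiv ℝ (fun q => ‖u q‖ ^ 2) p (0, 1)‖ :=
        integral_norm_sq_le_integral_norm_fderiv_mul (hu.norm_sq ℝ) hsupp_sq
    _ ≤ _ := by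
        gcongr <;> exact integral_norm_fderiv_norm_sq_le hu hsupp _

theorem ladyzhenskaya_inequality_R2_general (hu : ContDiff ℝ 1 u) (hsupp : HasCompactSupport u) :
    √(∫ p, ‖u p‖ ^ 4) ≤
      2 * √(∫ p, ‖u p‖ ^ 2) *
        √(∫ p, (‖fderiv ℝ u p (1, 0)‖ ^ 2 + ‖fderiv ℝ u p (0, 1)‖ ^ 2)) := by
  set G := ∫ p, (‖fderiv ℝ u p (1, 0)‖ ^ 2 + ‖fderiv ℝ u p (0, 1)‖ ^ 2)
  have hint (w : ℝ × ℝ) : Integrable fun p => ‖fderiv ℝ u p w‖ ^ 2 :=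
    (Continuous.memLp_of_hasCompactSupport (by fun_prop)
      (hsupp.fderiv_apply ℝ w)).integrable_norm_pow two_ne_zero
  have hfst : ∫ p, ‖fderiv ℝ u p (1, 0)‖ ^ 2 ≤ G :=
    integral_mono (hint _) ((hint _).add (hint _)) fun _ => le_add_of_nonneg_right (sq_nonneg _)
  have hsnd : ∫ p, ‖fderiv ℝ u p (0, 1)‖ ^ 2 ≤ G :=
    integral_mono (hint _) ((hint _).add (hint _)) fun _ => le_add_of_nonneg_left (sq_nonneg _)
  refine sqrt_le_iff.2 ⟨by positivity, ?_⟩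
  calc ∫ p, ‖u p‖ ^ 4
      ≤ 2 * (√(∫ p, ‖u p‖ ^ 2) * √(∫ p, ‖fderiv ℝ u p (1, 0)‖ ^ 2)) *
          (2 * (√(∫ p, ‖u p‖ ^ 2) * √(∫ p, ‖fderiv ℝ u p (0, 1)‖ ^ 2))) :=
        integral_norm_pow_four_le hu hsupp
    _ ≤ 2 * (√(∫ p, ‖u p‖ ^ 2) * √G) * (2 * (√(∫ p, ‖u p‖ ^ 2) * √G)) := by gcongr
    _ = (2 * √(∫ p, ‖u p‖ ^ 2) * √G) ^ 2 := by ring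

end Ladyzhenskaya

/-- Ladyzhenskaya's interpolation inequality in two dimensions:
for `u ∈ C¹_c(ℝ²)`, `‖u‖_{L⁴}² ≤ 2 ‖u‖_{L²} ‖∇u‖_{L²}`. -/
theorem ladyzhenskaya_inequality_R2 (u : ℝ × ℝ → ℝ)
    (hu : ContDiff ℝ 1 u) (hsupp : HasCompactSupport u) :
    Real.sqrt (∫ p : ℝ × ℝ, (u p) ^ 4) ≤
      2 * Real.sqrt (∫ p : ℝ × ℝ, (u p) ^ 2) *
        Real.sqrt (∫ p : ℝ × ℝ, ((pdx u p) ^ 2 + (pdy u p) ^ 2)) := by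
  have hd := hu.differentiable one_ne_zero
  simpa [pdx_eq_fderiv (hd _), pdy_eq_fderiv (hd _), Even.pow_abs (n := 4) (by decide)] using
    ladyzhenskaya_inequality_R2_general hu hsupp
end

section
/- Let L > 0 and D = (0,∞) × (0,L). Let u : ℝ² → ℝ be twice continuously differentiable with u(x,0) = u(x,L) = 0 for all x ≥ 0, with mixed derivative u_{xy} continuous, with u and all its first and second partial derivatives tending to 0 as x → ∞ uniformly in y, and with ∫_D u² dxdy, ∫_D (u_x² + u_y²) dxdy and ∫_D u_{xy}² dxdy finite. Then sup_{(x,y) ∈ D} u(x,y)² ≤ ∫_D u² dxdy + ∫_D (u_x² + u_y²) dxdy + ∫_D u_{xy}² dxdy. -/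
open MeasureTheory Real

/-- `f` tends to `0` as `x → ∞`, uniformly in `y`. -/
def DecaysUnif (f : ℝ × ℝ → ℝ) : Prop :=
  ∀ ε > 0, ∃ M : ℝ, ∀ x ≥ M, ∀ y : ℝ, |f (x, y)| ≤ ε

/-!
For almost every `y` the function `G = u² + u_y²` is integrable in `x`, hence arbitrarily small at
arbitrarily large `x`. With `e = u² + u_x² + u_y² + u_{xy}²` one has `|G_x| ≤ e` by AM-GM, so
`G(x, y) ≤ ∫_x^∞ e(s, y) ds`. Since also `|(u²)_y| ≤ G`, integrating in `y` from the edge where `u`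
vanishes gives `u² ≤ ∫ e`.
-/

open Set Filter Topology

section HalfLine

variable {E : Type*} [NormedAddCommGroup E] {f : ℝ → E} {a : ℝ}

lemma frequently_norm_lt_of_integrableOn_Ioi (hf : IntegrableOn f (Ioi a)) {ε : ℝ} (hε : 0 < ε) :
    ∃ᶠ x in atTop, ‖f x‖ < ε := by
  intro hlarge
  obtain ⟨N, hN⟩ := eventually_atTop.1 hlarge
  have hsub : Ioi (max a N) ⊆ {x | ε ≤ ‖f x‖} := fun x hx =>
    not_lt.1 (hN x ((le_max_right a N).trans (mem_Ioi.1 hx).le))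
  have hfin : volume.restrict (Ioi (max a N)) {x | ε ≤ ‖f x‖} < ⊤ :=
    (hf.mono_set (Ioi_subset_Ioi (le_max_left a N))).integrable.measure_norm_ge_lt_top hε
  rw [Measure.restrict_apply_superset hsub, Real.volume_Ioi] at hfin
  exact lt_irrefl _ hfin

lemma norm_le_integral_Ioi_of_norm_deriv_le [NormedSpace ℝ E] {φ : ℝ → ℝ}
    (hfc : ContinuousOn f (Ici a)) (hfd : DifferentiableOn ℝ f (Ioi a))
    (hfi : IntegrableOn f (Ioi a)) (hφi : IntegrableOn φ (Ioi a))
    (hfφ : ∀ᵐ x, x ∈ Ioi a → ‖deriv f x‖ ≤ φ x) :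
    ‖f a‖ ≤ ∫ x in Ioi a, φ x := by
  refine le_of_forall_pos_le_add fun ε hε => ?_
  have hlim : Tendsto (fun b => (∫ x in a..b, φ x) + ε) atTop (𝓝 ((∫ x in Ioi a, φ x) + ε)) :=
    (intervalIntegral_tendsto_integral_Ioi a hφi tendsto_id).add_const ε
  refine ge_of_tendsto_of_frequently hlim ?_
  refine ((frequently_norm_lt_of_integrableOn_Ioi hfi hε).and_eventually
    (eventually_ge_atTop a)).mono fun b ⟨hfb, hab⟩ => ?_
  have hvar : ‖f b - f a‖ ≤ ∫ x in a..b, φ x :=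
    norm_sub_le_integral_of_norm_deriv_le_of_le hab (hfc.mono Icc_subset_Ici_self)
      (hfd.mono Ioo_subset_Ioi_self) (hfφ.mono fun x hx hxab => hx hxab.1)
      ((intervalIntegrable_iff_integrableOn_Ioc_of_le hab).2 (hφi.mono_set Ioc_subset_Ioi_self))
  linarith [hfb, hvar, norm_le_norm_add_norm_sub (f b) (f a)]

end HalfLine

section Slices

variable {𝕜 F : Type*} [NontriviallyNormedField 𝕜] [NormedAddCommGroup F] [NormedSpace 𝕜 F]
  {f : 𝕜 × 𝕜 → F} {p : 𝕜 × 𝕜}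

lemma hasDerivAt_fst_of_differentiableAt (hf : DifferentiableAt 𝕜 f p) :
    HasDerivAt (fun x => f (x, p.2)) (fderiv 𝕜 f p (1, 0)) p.1 :=
  HasFDerivAt.comp_hasDerivAt p.1 (l := f) hf.hasFDerivAt
    ((hasDerivAt_id p.1).prodMk (hasDerivAt_const p.1 p.2))

lemma hasDerivAt_snd_of_differentiableAt (hf : DifferentiableAt 𝕜 f p) :
    HasDerivAt (fun y => f (p.1, y)) (fderiv 𝕜 f p (0, 1)) p.2 :=
  HasFDerivAt.comp_hasDerivAt p.2 (l := f) hf.hasFDerivAt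
    ((hasDerivAt_const p.2 p.1).prodMk (hasDerivAt_id p.2))

end Slices

lemma abs_two_mul_mul_le_sq_add_sq (s t : ℝ) : |2 * s * t| ≤ s ^ 2 + t ^ 2 :=
  abs_le.2 ⟨by linarith [sq_nonneg (s + t)], two_mul_le_add_sq s t⟩

/-- `u` has partial derivatives `u_x`, `u_y` and `u_{xy}` at every point of `s`, the last one being
taken in the order `pdx (pdy u)`. Without it `pdx` and `pdy` may take the junk value `0`. -/
structure HasMixedPartialsOn (u : ℝ × ℝ → ℝ) (s : Set (ℝ × ℝ)) : Prop where
  hasDerivAt_pdx : ∀ p ∈ s, HasDerivAt (fun x => u (x, p.2)) (pdx u p) p.1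
  hasDerivAt_pdy : ∀ p ∈ s, HasDerivAt (fun y => u (p.1, y)) (pdy u p) p.2
  hasDerivAt_pdx_pdy : ∀ p ∈ s, HasDerivAt (fun x => pdy u (x, p.2)) (pdx (pdy u) p) p.1

/-- The density `u² + |∇u|² + u_{xy}²` of the energy that controls `sup u²`. -/
noncomputable def mixedEnergy (u : ℝ × ℝ → ℝ) (p : ℝ × ℝ) : ℝ :=
  u p ^ 2 + (pdx u p ^ 2 + pdy u p ^ 2) + pdx (pdy u) p ^ 2

section MixedPartials

variable {u : ℝ × ℝ → ℝ}

lemma mixedEnergy_nonneg (p : ℝ × ℝ) : 0 ≤ mixedEnergy u p := by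
  unfold mixedEnergy
  positivity

lemma HasMixedPartialsOn.mono {s t : Set (ℝ × ℝ)} (hu : HasMixedPartialsOn u t) (hst : s ⊆ t) :
    HasMixedPartialsOn u s where
  hasDerivAt_pdx p hp := hu.hasDerivAt_pdx p (hst hp)
  hasDerivAt_pdy p hp := hu.hasDerivAt_pdy p (hst hp)
  hasDerivAt_pdx_pdy p hp := hu.hasDerivAt_pdx_pdy p (hst hp)

lemma hasMixedPartialsOn_of_contDiff (hu : ContDiff ℝ 2 u) (s : Set (ℝ × ℝ)) :
    HasMixedPartialsOn u s := by
  have hud : Differentiable ℝ u := hu.differentiable two_ne_zero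
  have hpdy : pdy u = fun p => fderiv ℝ u p (0, 1) :=
    funext fun p => (hasDerivAt_snd_of_differentiableAt (hud p)).deriv
  have hpdyd : Differentiable ℝ (pdy u) := by
    rw [hpdy]
    exact ((hu.fderiv_right one_add_one_eq_two.le).clm_apply contDiff_const).differentiable
      one_ne_zero
  exact
    { hasDerivAt_pdx p _ :=
        (hasDerivAt_fst_of_differentiableAt (hud p)).differentiableAt.hasDerivAt
      hasDerivAt_pdy p _ :=
        (hasDerivAt_snd_of_differentiableAt (hud p)).differentiableAt.hasDerivAt
      hasDerivAt_pdx_pdy p _ :=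
        (hasDerivAt_fst_of_differentiableAt (hpdyd p)).differentiableAt.hasDerivAt }

lemma sq_add_pdy_sq_le_integral_Ioi {x₀ y : ℝ} (hu : HasMixedPartialsOn u (Ici x₀ ×ˢ {y}))
    (hi : IntegrableOn (fun x => mixedEnergy u (x, y)) (Ioi x₀)) :
    u (x₀, y) ^ 2 + pdy u (x₀, y) ^ 2 ≤ ∫ x in Ioi x₀, mixedEnergy u (x, y) := by
  set G : ℝ → ℝ := fun x => u (x, y) ^ 2 + pdy u (x, y) ^ 2 with hG
  have hG_nonneg : ∀ x, 0 ≤ G x := fun x => by positivity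
  have hG_deriv : ∀ x ∈ Ici x₀, HasDerivAt G
      (2 * u (x, y) * pdx u (x, y) + 2 * pdy u (x, y) * pdx (pdy u) (x, y)) x := fun x hx => by
    simpa using ((hu.hasDerivAt_pdx (x, y) ⟨hx, rfl⟩).fun_pow 2).fun_add
      ((hu.hasDerivAt_pdx_pdy (x, y) ⟨hx, rfl⟩).fun_pow 2)
  have hG_cont : ContinuousOn G (Ici x₀) := fun x hx =>
    (hG_deriv x hx).continuousAt.continuousWithinAt
  have hG_le : ∀ x, ‖G x‖ ≤ mixedEnergy u (x, y) := fun x => by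
    rw [Real.norm_of_nonneg (hG_nonneg x), hG, mixedEnergy]
    linarith [sq_nonneg (pdx u (x, y)), sq_nonneg (pdx (pdy u) (x, y))]
  have hG_int : IntegrableOn G (Ioi x₀) :=
    hi.mono' ((hG_cont.mono Ioi_subset_Ici_self).aestronglyMeasurable measurableSet_Ioi)
      (.of_forall hG_le)
  have hG'_le : ∀ x ∈ Ioi x₀, ‖deriv G x‖ ≤ mixedEnergy u (x, y) := fun x hx => by
    rw [(hG_deriv x (Ioi_subset_Ici_self hx)).deriv, Real.norm_eq_abs, mixedEnergy]
    linarith [abs_add_le (2 * u (x, y) * pdx u (x, y)) (2 * pdy u (x, y) * pdx (pdy u) (x, y)),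
      abs_two_mul_mul_le_sq_add_sq (u (x, y)) (pdx u (x, y)),
      abs_two_mul_mul_le_sq_add_sq (pdy u (x, y)) (pdx (pdy u) (x, y))]
  calc G x₀ = ‖G x₀‖ := (Real.norm_of_nonneg (hG_nonneg x₀)).symm
    _ ≤ ∫ x in Ioi x₀, mixedEnergy u (x, y) :=
      norm_le_integral_Ioi_of_norm_deriv_le hG_cont
        (fun x hx => (hG_deriv x (Ioi_subset_Ici_self hx)).differentiableAt.differentiableWithinAt)
        hG_int hi (.of_forall hG'_le)

lemma abs_sq_sub_sq_le_setIntegral_mixedEnergy {x₀ y₁ y₂ : ℝ} (hy : y₁ ≤ y₂)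
    (hu : HasMixedPartialsOn u (Ici x₀ ×ˢ Icc y₁ y₂))
    (hi : IntegrableOn (mixedEnergy u) (Ioi x₀ ×ˢ Ioc y₁ y₂)) :
    |u (x₀, y₂) ^ 2 - u (x₀, y₁) ^ 2| ≤ ∫ q in Ioi x₀ ×ˢ Ioc y₁ y₂, mixedEnergy u q := by
  have hrestrict : (volume : Measure (ℝ × ℝ)).restrict (Ioi x₀ ×ˢ Ioc y₁ y₂) =
      (volume.restrict (Ioi x₀)).prod (volume.restrict (Ioc y₁ y₂)) := by
    rw [Measure.volume_eq_prod, Measure.prod_restrict]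
  rw [IntegrableOn, hrestrict] at hi
  have hsq_deriv : ∀ y ∈ Icc y₁ y₂,
      HasDerivAt (fun y => u (x₀, y) ^ 2) (2 * u (x₀, y) * pdy u (x₀, y)) y := fun y hy => by
    simpa using (hu.hasDerivAt_pdy (x₀, y) ⟨self_mem_Ici, hy⟩).fun_pow 2
  have hsq_deriv_le : ∀ᵐ y, y ∈ Ioo y₁ y₂ →
      ‖deriv (fun y => u (x₀, y) ^ 2) y‖ ≤ ∫ x in Ioi x₀, mixedEnergy u (x, y) := by
    filter_upwards [(ae_restrict_iff' measurableSet_Ioc).1 hi.prod_left_ae] with y hslice hyIoo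
    have hyIcc : y ∈ Icc y₁ y₂ := Ioo_subset_Icc_self hyIoo
    calc ‖deriv (fun y => u (x₀, y) ^ 2) y‖ = |2 * u (x₀, y) * pdy u (x₀, y)| := by
          rw [(hsq_deriv y hyIcc).deriv, Real.norm_eq_abs]
      _ ≤ u (x₀, y) ^ 2 + pdy u (x₀, y) ^ 2 := abs_two_mul_mul_le_sq_add_sq _ _
      _ ≤ ∫ x in Ioi x₀, mixedEnergy u (x, y) :=
          sq_add_pdy_sq_le_integral_Ioi
            (hu.mono (prod_mono_right (singleton_subset_iff.2 hyIcc)))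
            (hslice (Ioo_subset_Ioc_self hyIoo))
  calc |u (x₀, y₂) ^ 2 - u (x₀, y₁) ^ 2|
      ≤ ∫ y in y₁..y₂, ∫ x in Ioi x₀, mixedEnergy u (x, y) :=
        norm_sub_le_integral_of_norm_deriv_le_of_le hy
          (fun y hy => (hsq_deriv y hy).continuousAt.continuousWithinAt)
          (fun y hy =>
            (hsq_deriv y (Ioo_subset_Icc_self hy)).differentiableAt.differentiableWithinAt)
          hsq_deriv_le
          ((intervalIntegrable_iff_integrableOn_Ioc_of_le hy).2 hi.integral_prod_right)
    _ = ∫ q in Ioi x₀ ×ˢ Ioc y₁ y₂, mixedEnergy u q := by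
        rw [hrestrict, integral_prod_symm _ hi, intervalIntegral.integral_of_le hy]

lemma sq_le_setIntegral_mixedEnergy {a b c : ℝ}
    (hu : HasMixedPartialsOn u (Ioi a ×ˢ Ioo b c))
    (hbc : ∀ x > a, Tendsto (fun y => u (x, y)) (𝓝[>] b) (𝓝 0))
    (hi : IntegrableOn (mixedEnergy u) (Ioi a ×ˢ Ioo b c)) :
    ∀ p ∈ Ioi a ×ˢ Ioo b c, u p ^ 2 ≤ ∫ q in Ioi a ×ˢ Ioo b c, mixedEnergy u q := by
  rintro ⟨x₀, y₀⟩ ⟨hx₀, hy₀⟩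
  have hlim : Tendsto (fun η => u (x₀, y₀) ^ 2 - u (x₀, η) ^ 2) (𝓝[>] b)
      (𝓝 (u (x₀, y₀) ^ 2)) := by
    simpa using ((hbc x₀ hx₀).pow 2).const_sub (u (x₀, y₀) ^ 2)
  refine le_of_tendsto hlim ?_
  filter_upwards [Ioo_mem_nhdsGT hy₀.1] with η hη
  have hIcc : Icc η y₀ ⊆ Ioo b c := Icc_subset_Ioo hη.1 hy₀.2
  have hsub : Ioi x₀ ×ˢ Ioc η y₀ ⊆ Ioi a ×ˢ Ioo b c :=
    prod_mono (Ioi_subset_Ioi (le_of_lt hx₀)) (Ioc_subset_Icc_self.trans hIcc)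
  calc u (x₀, y₀) ^ 2 - u (x₀, η) ^ 2
      ≤ |u (x₀, y₀) ^ 2 - u (x₀, η) ^ 2| := le_abs_self _
    _ ≤ ∫ q in Ioi x₀ ×ˢ Ioc η y₀, mixedEnergy u q :=
        abs_sq_sub_sq_le_setIntegral_mixedEnergy hη.2.le
          (hu.mono (prod_mono (Ici_subset_Ioi.2 hx₀) hIcc)) (hi.mono_set hsub)
    _ ≤ ∫ q in Ioi a ×ˢ Ioo b c, mixedEnergy u q :=
        setIntegral_mono_set hi (.of_forall mixedEnergy_nonneg) hsub.eventuallyLE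

theorem sup_square_halfstrip_general {a b c : ℝ}
    (hu : HasMixedPartialsOn u (Ioi a ×ˢ Ioo b c))
    (hbc : ∀ x > a, Tendsto (fun y => u (x, y)) (𝓝[>] b) (𝓝 0))
    (hi1 : IntegrableOn (fun p => u p ^ 2) (Ioi a ×ˢ Ioo b c))
    (hi2 : IntegrableOn (fun p => pdx u p ^ 2 + pdy u p ^ 2) (Ioi a ×ˢ Ioo b c))
    (hi3 : IntegrableOn (fun p => pdx (pdy u) p ^ 2) (Ioi a ×ˢ Ioo b c)) :
    ∀ p ∈ Ioi a ×ˢ Ioo b c,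
      u p ^ 2 ≤
        (∫ q in Ioi a ×ˢ Ioo b c, u q ^ 2) +
          (∫ q in Ioi a ×ˢ Ioo b c, (pdx u q ^ 2 + pdy u q ^ 2)) +
            ∫ q in Ioi a ×ˢ Ioo b c, pdx (pdy u) q ^ 2 := by
  rw [← integral_add hi1 hi2, ← integral_add (hi1.fun_add hi2) hi3]
  exact sq_le_setIntegral_mixedEnergy hu hbc ((hi1.add hi2).add hi3)

end MixedPartials

/-- Sup-norm (Agmon-type) bound on the half-strip `D = (0,∞) × (0,L)`
(first inequality of Proposition 3.3):
`sup_D u² ≤ ‖u‖² + ‖∇u‖² + ‖u_{xy}‖²`. -/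
theorem sup_square_halfstrip (L : ℝ) (hL : 0 < L)
    (D : Set (ℝ × ℝ)) (hD : D = Set.Ioi (0:ℝ) ×ˢ Set.Ioo 0 L)
    (u : ℝ × ℝ → ℝ) (hu : ContDiff ℝ 2 u)
    (hbc : ∀ x ≥ (0:ℝ), u (x, 0) = 0 ∧ u (x, L) = 0)
    (hmix : Continuous (pdx (pdy u)))
    (hdec : DecaysUnif u ∧ DecaysUnif (pdx u) ∧ DecaysUnif (pdy u) ∧
      DecaysUnif (pdx (pdx u)) ∧ DecaysUnif (pdx (pdy u)) ∧ DecaysUnif (pdy (pdy u)))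
    (hi1 : IntegrableOn (fun p => (u p) ^ 2) D)
    (hi2 : IntegrableOn (fun p => (pdx u p) ^ 2 + (pdy u p) ^ 2) D)
    (hi3 : IntegrableOn (fun p => (pdx (pdy u) p) ^ 2) D) :
    ∀ p ∈ D,
      (u p) ^ 2 ≤
        (∫ q in D, (u q) ^ 2) +
          (∫ q in D, ((pdx u q) ^ 2 + (pdy u q) ^ 2)) +
            ∫ q in D, (pdx (pdy u) q) ^ 2 := by
  subst hD
  have hedge : ∀ x > 0, Tendsto (fun y => u (x, y)) (𝓝[>] 0) (𝓝 0) := fun x hx =>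
    ((hu.continuous.comp (Continuous.prodMk_right x)).tendsto' 0 0 (hbc x hx.le).1).mono_left
      nhdsWithin_le_nhds
  exact sup_square_halfstrip_general (hasMixedPartialsOn_of_contDiff hu _) hedge hi1 hi2 hi3
end

section
/- Let L > 0, T > 0, α ∈ {0,1}, and D = (0,∞) × (0,L). Let u : [0,T] × ℝ² → ℝ be smooth and satisfy the 2D Kawahara equation u_t + α u_x + u u_x + u_{xxx} + u_{xyy} − u_{xxxxx} = 0 on [0,T] × D, with boundary conditions u(t,0,y) = u_x(t,0,y) = 0 for y ∈ (0,L) and u(t,x,0) = u(t,x,L) = 0 for x > 0, and suppose that u and all its spatial partial derivatives up to order five tend to 0 as x → ∞ uniformly in y and t and are square-integrable over D uniformly in t. Then for every t ∈ [0,T], ∫_D u(t,x,y)² dxdy + ∫₀^t ∫₀^L u_{xx}(s,0,y)² dy ds = ∫_D u(0,x,y)² dxdy. In particular, ∫_D u(t)² dxdy ≤ ∫_D u(0)² dxdy for all t ∈ [0,T]. -/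
open MeasureTheory Real

/-- Mixed spatial partial derivative `∂_x^i ∂_y^j`. -/
noncomputable def pd (i j : ℕ) (u : ℝ × ℝ → ℝ) : ℝ × ℝ → ℝ :=
  pdx^[i] (pdy^[j] u)

/-!
Along a solution, the energy density obeys a local conservation law `∂ₜ(u²) + ∂ₓΦ + ∂_yΨ = 0`.
Integrate it over the rectangle `[0, R] × [0, L]` by the divergence theorem: `Ψ` contains the
factor `u` and vanishes on the sides `y = 0` and `y = L`; at the wall `x = 0` the boundary
conditions kill every term of `Φ` except `-u_xx²`; and `Φ → 0` uniformly as `R → ∞`. Since `u²` is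
nonnegative, the limit `R → ∞` also yields the integrability of `u(t)²` from that of `u(0)²`.
-/

section

open Filter Set Topology
open scoped ContDiff

lemma contDiff_deriv_apply {E F : Type*} [NormedAddCommGroup E] [NormedSpace ℝ E]
    [NormedAddCommGroup F] [NormedSpace ℝ F] {f : E → ℝ → F} {g : E → ℝ}
    (hf : ContDiff ℝ ∞ (Function.uncurry f)) (hg : ContDiff ℝ ∞ g) :
    ContDiff ℝ ∞ fun q => deriv (f q) (g q) := by
  simp only [← fderiv_apply_one_eq_deriv]
  exact hf.fderiv_apply hg contDiff_const (by simp)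

lemma contDiff_apply_of_uncurry {E F G : Type*} [NormedAddCommGroup E] [NormedSpace ℝ E]
    [NormedAddCommGroup F] [NormedSpace ℝ F] [NormedAddCommGroup G] [NormedSpace ℝ G]
    {n : WithTop ℕ∞} {f : E → F → G} (hf : ContDiff ℝ n (Function.uncurry f)) (q : E) :
    ContDiff ℝ n (f q) :=
  hf.comp (contDiff_prodMk_right q)

lemma hasDerivAt_sq_of_uncurry {E : Type*} [NormedAddCommGroup E] [NormedSpace ℝ E]
    {u : ℝ → E → ℝ} (hu : Differentiable ℝ (Function.uncurry u)) (s : ℝ) (p : E) :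
    HasDerivAt (fun s => u s p ^ 2) (2 * u s p * deriv (fun s => u s p) s) s := by
  have hd : Differentiable ℝ (fun s => u s p) :=
    hu.comp (differentiable_id.prodMk (differentiable_const p))
  simpa using (hd s).hasDerivAt.fun_pow 2

lemma continuous_uncurry_two_mul_mul_deriv {E : Type*} [NormedAddCommGroup E] [NormedSpace ℝ E]
    {u : ℝ → E → ℝ} (hu : ContDiff ℝ ∞ (Function.uncurry u)) :
    Continuous (Function.uncurry fun s p => 2 * u s p * deriv (fun s => u s p) s) := by
  have htime : ContDiff ℝ ∞ fun q : ℝ × E => deriv (fun s => u s q.2) q.1 :=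
    contDiff_deriv_apply (f := fun (q : ℝ × E) s => u s q.2) (g := fun q => q.1)
      (hu.comp (by fun_prop : ContDiff ℝ ∞ fun z : (ℝ × E) × ℝ => (z.2, z.1.2)))
      contDiff_fst
  exact (continuous_const.mul hu.continuous).mul htime.continuous

lemma setIntegral_sub_eq_intervalIntegral {X E : Type*} [TopologicalSpace X]
    [SecondCountableTopology X] [MeasurableSpace X] [BorelSpace X] {μ : Measure X} [SFinite μ]
    [IsFiniteMeasureOnCompacts μ] [NormedAddCommGroup E] [NormedSpace ℝ E] [CompleteSpace E]
    {K : Set X} (hK : IsCompact K) (hKm : MeasurableSet K)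
    {f f' : ℝ → X → E} {a b : ℝ} (ha : IntegrableOn (f a) K μ) (hb : IntegrableOn (f b) K μ)
    (hf' : Continuous (Function.uncurry f'))
    (hderiv : ∀ s p, HasDerivAt (fun s => f s p) (f' s p) s) :
    ∫ p in K, f b p ∂μ - ∫ p in K, f a p ∂μ = ∫ s in a..b, ∫ p in K, f' s p ∂μ := by
  have hint : IntegrableOn (Function.uncurry f') (uIoc a b ×ˢ K) (volume.prod μ) :=
    (hf'.continuousOn.integrableOn_compact' (isCompact_uIcc.prod hK)
      (measurableSet_uIcc.prod hKm)).mono_set (prod_mono_left uIoc_subset_uIcc)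
  rw [IntegrableOn, ← Measure.prod_restrict] at hint
  rw [← integral_sub hb ha, intervalIntegral_integral_swap hint]
  refine integral_congr_ae (.of_forall fun p => ?_)
  exact (intervalIntegral.integral_eq_sub_of_hasDerivAt (fun s _ => hderiv s p)
    (Continuous.intervalIntegrable (by fun_prop) _ _)).symm

lemma tendsto_intervalIntegral_intervalIntegral_zero {ι E : Type*} [NormedAddCommGroup E]
    [NormedSpace ℝ E] {l : Filter ι} {a b c d : ℝ} {F : ι → ℝ × ℝ → E}
    (hF : TendstoUniformlyOn F 0 l (uIcc a b ×ˢ uIcc c d)) :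
    Tendsto (fun i => ∫ s in a..b, ∫ y in c..d, F i (s, y)) l (𝓝 0) := by
  refine Metric.tendsto_nhds.2 fun ε hε => ?_
  obtain ⟨δ, hδ, hδε⟩ := exists_pos_mul_lt hε (|d - c| * |b - a|)
  filter_upwards [Metric.tendstoUniformlyOn_iff.1 hF δ hδ] with i hi
  have inner (s) (hs : s ∈ uIoc a b) : ‖∫ y in c..d, F i (s, y)‖ ≤ δ * |d - c| :=
    intervalIntegral.norm_integral_le_of_norm_le_const fun y hy => by
      simpa using (hi (s, y) ⟨uIoc_subset_uIcc hs, uIoc_subset_uIcc hy⟩).le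
  rw [dist_zero_right]
  calc ‖∫ s in a..b, ∫ y in c..d, F i (s, y)‖ ≤ δ * |d - c| * |b - a| :=
        intervalIntegral.norm_integral_le_of_norm_le_const inner
    _ = |d - c| * |b - a| * δ := by ring
    _ < ε := hδε

lemma continuous_intervalIntegral_vertical {P E : Type*} [TopologicalSpace P]
    [NormedAddCommGroup E] [NormedSpace ℝ E] {f : P → ℝ × ℝ → E}
    (hf : Continuous (Function.uncurry f)) (x a b : ℝ) :
    Continuous fun s => ∫ y in a..b, f s (x, y) :=
  intervalIntegral.continuous_parametric_intervalIntegral_of_continuous' (μ := volume)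
    (f := fun s y => f s (x, y))
    (hf.comp (by fun_prop : Continuous fun q : P × ℝ => (q.1, x, q.2))) a b

lemma Icc_prod_ae_eq_Ioo_prod_Ioo (a b : ℝ × ℝ) :
    Icc a b =ᵐ[volume] Ioo a.1 b.1 ×ˢ Ioo a.2 b.2 := by
  rw [Icc_prod_eq]
  exact Measure.set_prod_ae_eq Ioo_ae_eq_Icc.symm Ioo_ae_eq_Icc.symm

lemma aecover_halfStrip_Icc (L : ℝ) :
    AECover (volume.restrict (Ioi 0 ×ˢ Ioo 0 L)) atTop fun R : ℝ => Icc (0 : ℝ × ℝ) (R, L) where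
  ae_eventually_mem := by
    filter_upwards [ae_restrict_mem (measurableSet_Ioi.prod measurableSet_Ioo)] with p hp
    filter_upwards [eventually_ge_atTop p.1] with R hR
    exact ⟨⟨hp.1.le, hp.2.1.le⟩, hR, hp.2.2.le⟩
  measurableSet _ := measurableSet_Icc

lemma restrict_halfStrip_restrict_Icc (R L : ℝ) :
    (volume.restrict (Ioi 0 ×ˢ Ioo 0 L)).restrict (Icc (0 : ℝ × ℝ) (R, L)) =
      volume.restrict (Icc 0 (R, L)) := by
  have closed : (Ioi 0 ×ˢ Ioo 0 L : Set (ℝ × ℝ)) =ᵐ[volume] Ici 0 ×ˢ Icc 0 L :=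
    Measure.set_prod_ae_eq Ioi_ae_eq_Ici Ioo_ae_eq_Icc
  rw [Measure.restrict_congr_set closed]
  exact Measure.restrict_restrict_of_subset fun p hp => ⟨hp.1.1, hp.1.2, hp.2.2⟩

lemma tendsto_setIntegral_Icc_halfStrip {E : Type*} [NormedAddCommGroup E] [NormedSpace ℝ E]
    {L : ℝ} {f : ℝ × ℝ → E} (hf : IntegrableOn f (Ioi 0 ×ˢ Ioo 0 L)) :
    Tendsto (fun R : ℝ => ∫ p in Icc 0 (R, L), f p) atTop
      (𝓝 (∫ p in Ioi 0 ×ˢ Ioo 0 L, f p)) := by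
  simpa only [restrict_halfStrip_restrict_Icc] using
    (aecover_halfStrip_Icc L).integral_tendsto_of_countably_generated hf

lemma integrableOn_halfStrip_and_setIntegral_eq_of_tendsto {L I : ℝ} {f : ℝ × ℝ → ℝ}
    (hf : Continuous f) (hnonneg : 0 ≤ f)
    (hI : Tendsto (fun R : ℝ => ∫ p in Icc 0 (R, L), f p) atTop (𝓝 I)) :
    IntegrableOn f (Ioi 0 ×ˢ Ioo 0 L) ∧ ∫ p in Ioi 0 ×ˢ Ioo 0 L, f p = I := by
  have cover := aecover_halfStrip_Icc L
  have hloc (R : ℝ) :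
      IntegrableOn f (Icc 0 (R, L)) (volume.restrict (Ioi 0 ×ˢ Ioo 0 L)) := by
    rw [IntegrableOn, restrict_halfStrip_restrict_Icc]
    exact hf.integrableOn_Icc
  simp only [← restrict_halfStrip_restrict_Icc] at hI
  exact ⟨cover.integrable_of_integral_tendsto_of_nonneg_ae I hloc (.of_forall hnonneg) hI,
    cover.integral_eq_of_tendsto_of_nonneg_ae I (.of_forall hnonneg) hloc hI⟩

section PartialDerivatives

variable {P : Type*} [NormedAddCommGroup P] [NormedSpace ℝ P]

lemma contDiff_uncurry_pdx {f : P → ℝ × ℝ → ℝ} (hf : ContDiff ℝ ∞ (Function.uncurry f)) :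
    ContDiff ℝ ∞ (Function.uncurry fun q => pdx (f q)) :=
  contDiff_deriv_apply (f := fun (q : P × ℝ × ℝ) x => f q.1 (x, q.2.2)) (g := fun q => q.2.1)
    (hf.comp (by fun_prop : ContDiff ℝ ∞ fun z : (P × ℝ × ℝ) × ℝ => (z.1.1, z.2, z.1.2.2)))
    (by fun_prop)

lemma contDiff_uncurry_pdy {f : P → ℝ × ℝ → ℝ} (hf : ContDiff ℝ ∞ (Function.uncurry f)) :
    ContDiff ℝ ∞ (Function.uncurry fun q => pdy (f q)) :=
  contDiff_deriv_apply (f := fun (q : P × ℝ × ℝ) y => f q.1 (q.2.1, y)) (g := fun q => q.2.2)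
    (hf.comp (by fun_prop : ContDiff ℝ ∞ fun z : (P × ℝ × ℝ) × ℝ => (z.1.1, z.1.2.1, z.2)))
    (by fun_prop)

lemma contDiff_uncurry_pd {f : P → ℝ × ℝ → ℝ} (hf : ContDiff ℝ ∞ (Function.uncurry f))
    (i j : ℕ) : ContDiff ℝ ∞ (Function.uncurry fun q => pd i j (f q)) := by
  have hy : ContDiff ℝ ∞ (Function.uncurry fun q => pdy^[j] (f q)) := by
    induction j with
    | zero => exact hf
    | succ j ih => simpa only [Function.iterate_succ_apply'] using contDiff_uncurry_pdy ih
  induction i with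
  | zero => exact hy
  | succ i ih => simpa only [pd, Function.iterate_succ_apply'] using contDiff_uncurry_pdx ih

lemma contDiff_pd {v : ℝ × ℝ → ℝ} (hv : ContDiff ℝ ∞ v) (i j : ℕ) : ContDiff ℝ ∞ (pd i j v) :=
  contDiff_apply_of_uncurry
    (contDiff_uncurry_pd (f := fun _ : ℝ => v) (hv.comp contDiff_snd) i j) 0

lemma pdx_eq_fderiv_s10 {v : ℝ × ℝ → ℝ} (hv : Differentiable ℝ v) :
    pdx v = fun p => fderiv ℝ v p (1, 0) :=
  funext fun p => ((hv p).hasFDerivAt.comp_hasDerivAt p.1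
    ((hasDerivAt_id p.1).prodMk (hasDerivAt_const p.1 p.2))).deriv

lemma pdy_eq_fderiv_s10 {v : ℝ × ℝ → ℝ} (hv : Differentiable ℝ v) :
    pdy v = fun p => fderiv ℝ v p (0, 1) :=
  funext fun p => ((hv p).hasFDerivAt.comp_hasDerivAt p.2
    ((hasDerivAt_const p.2 p.1).prodMk (hasDerivAt_id p.2))).deriv

lemma pdy_pdx {v : ℝ × ℝ → ℝ} (hv : ContDiff ℝ 2 v) : pdy (pdx v) = pdx (pdy v) := by
  have hd : Differentiable ℝ v := hv.differentiable (by simp)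
  have hd' : Differentiable ℝ (fderiv ℝ v) :=
    (hv.fderiv_right (m := 1) (by norm_num)).differentiable (by simp)
  rw [pdx_eq_fderiv_s10 hd, pdy_eq_fderiv_s10 hd, pdx_eq_fderiv_s10 (by fun_prop), pdy_eq_fderiv_s10 (by fun_prop)]
  funext p
  have hsymm : IsSymmSndFDerivAt ℝ v p := hv.contDiffAt.isSymmSndFDerivAt (by simp)
  rw [fderiv_clm_apply (hd' p) (differentiableAt_const _),
    fderiv_clm_apply (hd' p) (differentiableAt_const _)]
  simpa using hsymm (0, 1) (1, 0)

lemma pdx_pd (i j : ℕ) (v : ℝ × ℝ → ℝ) : pdx (pd i j v) = pd (i + 1) j v :=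
  (Function.iterate_succ_apply' pdx i _).symm

lemma pdy_pd {v : ℝ × ℝ → ℝ} (hv : ContDiff ℝ ∞ v) (i j : ℕ) :
    pdy (pd i j v) = pd i (j + 1) v := by
  induction i with
  | zero => exact (Function.iterate_succ_apply' pdy j v).symm
  | succ i ih =>
    rw [← pdx_pd, pdy_pdx (contDiff_infty.1 (contDiff_pd hv i j) 2), ih, pdx_pd]

lemma hasDerivAt_pd_left {v : ℝ × ℝ → ℝ} (hv : ContDiff ℝ ∞ v) (i j : ℕ) (p : ℝ × ℝ) :
    HasDerivAt (fun x => pd i j v (x, p.2)) (pd (i + 1) j v p) p.1 := by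
  rw [← pdx_pd]
  have hd : Differentiable ℝ (pd i j v) := (contDiff_pd hv i j).differentiable (by simp)
  exact DifferentiableAt.hasDerivAt (by fun_prop)

lemma hasDerivAt_pd_right {v : ℝ × ℝ → ℝ} (hv : ContDiff ℝ ∞ v) (i j : ℕ) (p : ℝ × ℝ) :
    HasDerivAt (fun y => pd i j v (p.1, y)) (pd i (j + 1) v p) p.2 := by
  rw [← pdy_pd hv]
  have hd : Differentiable ℝ (pd i j v) := (contDiff_pd hv i j).differentiable (by simp)
  exact DifferentiableAt.hasDerivAt (by fun_prop)

lemma setIntegral_Icc_pdx_add_pdy {f g : ℝ × ℝ → ℝ} (hf : ContDiff ℝ 1 f) (hg : ContDiff ℝ 1 g)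
    {a b : ℝ × ℝ} (hab : a ≤ b) :
    ∫ p in Icc a b, (pdx f p + pdy g p) =
      (∫ x in a.1..b.1, g (x, b.2)) - (∫ x in a.1..b.1, g (x, a.2)) +
        (∫ y in a.2..b.2, f (b.1, y)) - ∫ y in a.2..b.2, f (a.1, y) := by
  have hfd : Differentiable ℝ f := hf.differentiable one_ne_zero
  have hgd : Differentiable ℝ g := hg.differentiable one_ne_zero
  rw [pdx_eq_fderiv_s10 hfd, pdy_eq_fderiv_s10 hgd]
  refine integral_divergence_prod_Icc_of_hasFDerivAt_of_le f g (fderiv ℝ f) (fderiv ℝ g) a b hab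
    hf.continuous.continuousOn hg.continuous.continuousOn
    (fun p _ => (hfd p).hasFDerivAt) (fun p _ => (hgd p).hasFDerivAt) ?_
  have hf' := hf.continuous_fderiv one_ne_zero
  have hg' := hg.continuous_fderiv one_ne_zero
  exact ((hf'.clm_apply continuous_const).add (hg'.clm_apply continuous_const)).integrableOn_Icc

end PartialDerivatives

section Energy

/-- The spatial part of the Kawahara equation, which reads `u_t = -kawaharaOp α u`. -/
noncomputable def kawaharaOp (α : ℝ) (v : ℝ × ℝ → ℝ) (p : ℝ × ℝ) : ℝ :=
  α * pd 1 0 v p + v p * pd 1 0 v p + pd 3 0 v p + pd 1 2 v p - pd 5 0 v p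

/-- The `x`-component of the flux of the energy density `v²` under the Kawahara equation. -/
noncomputable def energyFluxX (α : ℝ) (v : ℝ × ℝ → ℝ) (p : ℝ × ℝ) : ℝ :=
  α * v p ^ 2 + 2 / 3 * v p ^ 3 + 2 * (v p * pd 2 0 v p) - pd 1 0 v p ^ 2 - pd 0 1 v p ^ 2
    - 2 * (v p * pd 4 0 v p - pd 1 0 v p * pd 3 0 v p) - pd 2 0 v p ^ 2

/-- The `y`-component of the flux of the energy density `v²` under the Kawahara equation. -/
noncomputable def energyFluxY (v : ℝ × ℝ → ℝ) (p : ℝ × ℝ) : ℝ :=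
  2 * (v p * pd 1 1 v p)

lemma contDiff_uncurry_energyFluxX {P : Type*} [NormedAddCommGroup P] [NormedSpace ℝ P] (α : ℝ)
    {f : P → ℝ × ℝ → ℝ} (hf : ContDiff ℝ ∞ (Function.uncurry f)) :
    ContDiff ℝ ∞ (Function.uncurry fun q => energyFluxX α (f q)) := by
  have h := contDiff_uncurry_pd hf
  exact ((((((contDiff_const.mul (hf.pow 2)).add (contDiff_const.mul (hf.pow 3))).add
    (contDiff_const.mul (hf.mul (h 2 0)))).sub ((h 1 0).pow 2)).sub ((h 0 1).pow 2)).sub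
    (contDiff_const.mul ((hf.mul (h 4 0)).sub ((h 1 0).mul (h 3 0))))).sub ((h 2 0).pow 2)

variable {v : ℝ × ℝ → ℝ}

lemma contDiff_energyFluxX (α : ℝ) (hv : ContDiff ℝ ∞ v) : ContDiff ℝ ∞ (energyFluxX α v) :=
  contDiff_apply_of_uncurry
    (contDiff_uncurry_energyFluxX (f := fun _ : ℝ => v) α (hv.comp contDiff_snd)) 0

lemma contDiff_energyFluxY (hv : ContDiff ℝ ∞ v) : ContDiff ℝ ∞ (energyFluxY v) :=
  contDiff_const.mul (hv.mul (contDiff_pd hv 1 1))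

lemma pdx_energyFluxX (α : ℝ) (hv : ContDiff ℝ ∞ v) (p : ℝ × ℝ) :
    pdx (energyFluxX α v) p = 2 * v p * (α * pd 1 0 v p + v p * pd 1 0 v p + pd 3 0 v p
      - pd 5 0 v p) - 2 * pd 0 1 v p * pd 1 1 v p := by
  have h i j := hasDerivAt_pd_left hv i j p
  have h00 : HasDerivAt (fun x => v (x, p.2)) (pd 1 0 v p) p.1 := h 0 0
  have flux := (((((((h00.pow 2).const_mul α).add ((h00.pow 3).const_mul (2 / 3))).add
    ((h00.mul (h 2 0)).const_mul 2)).sub ((h 1 0).pow 2)).sub ((h 0 1).pow 2)).sub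
    (((h00.mul (h 4 0)).sub ((h 1 0).mul (h 3 0))).const_mul 2)).sub ((h 2 0).pow 2)
  refine flux.deriv.trans ?_
  push_cast
  ring

lemma pdy_energyFluxY (hv : ContDiff ℝ ∞ v) (p : ℝ × ℝ) :
    pdy (energyFluxY v) p = 2 * v p * pd 1 2 v p + 2 * pd 0 1 v p * pd 1 1 v p := by
  have h i j := hasDerivAt_pd_right hv i j p
  have flux := ((h 0 0).mul (h 1 1)).const_mul 2
  refine flux.deriv.trans ?_
  simp only [pd, Function.iterate_zero, id]
  ring

lemma pdx_energyFluxX_add_pdy_energyFluxY (α : ℝ) (hv : ContDiff ℝ ∞ v) (p : ℝ × ℝ) :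
    pdx (energyFluxX α v) p + pdy (energyFluxY v) p = 2 * v p * kawaharaOp α v p := by
  rw [pdx_energyFluxX α hv, pdy_energyFluxY hv, kawaharaOp]
  ring

lemma energyFluxX_wall (α : ℝ) {L : ℝ}
    (hwall : ∀ y ∈ Ioo 0 L, v (0, y) = 0 ∧ pd 1 0 v (0, y) = 0) {y : ℝ} (hy : y ∈ Ioo 0 L) :
    energyFluxX α v (0, y) = -pd 2 0 v (0, y) ^ 2 := by
  have hlocal : (fun z => v (0, z)) =ᶠ[𝓝 y] fun _ => 0 := by
    filter_upwards [isOpen_Ioo.mem_nhds hy] with z hz using (hwall z hz).1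
  have htangential : pd 0 1 v (0, y) = 0 := hlocal.deriv_eq.trans (deriv_const y 0)
  simp [energyFluxX, hwall y hy, htangential]

lemma setIntegral_two_mul_kawaharaOp (α : ℝ) {L R : ℝ} (hL : 0 ≤ L) (hR : 0 ≤ R)
    (hv : ContDiff ℝ ∞ v) (hwall : ∀ y ∈ Ioo 0 L, v (0, y) = 0 ∧ pd 1 0 v (0, y) = 0)
    (hsides : ∀ x > 0, v (x, 0) = 0 ∧ v (x, L) = 0) :
    ∫ p in Icc 0 (R, L), 2 * v p * kawaharaOp α v p =
      (∫ y in 0..L, energyFluxX α v (R, y)) + ∫ y in 0..L, pd 2 0 v (0, y) ^ 2 := by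
  have hside {b : ℝ} (hb : ∀ x > 0, v (x, b) = 0) : ∫ x in 0..R, energyFluxY v (x, b) = 0 := by
    refine (intervalIntegral.integral_congr_Ioo_of_le hR fun x hx => ?_).trans
      intervalIntegral.integral_zero
    simp [energyFluxY, hb x hx.1]
  have hleft : ∫ y in 0..L, energyFluxX α v (0, y) = -∫ y in 0..L, pd 2 0 v (0, y) ^ 2 := by
    rw [← intervalIntegral.integral_neg]
    exact intervalIntegral.integral_congr_Ioo_of_le hL fun y hy => energyFluxX_wall α hwall hy
  simp only [← pdx_energyFluxX_add_pdy_energyFluxY α hv]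
  rw [setIntegral_Icc_pdx_add_pdy (contDiff_infty.1 (contDiff_energyFluxX α hv) 1)
    (contDiff_infty.1 (contDiff_energyFluxY hv) 1) ⟨hR, hL⟩]
  simp only [Prod.fst_zero, Prod.snd_zero]
  rw [hside fun x hx => (hsides x hx).1, hside fun x hx => (hsides x hx).2, hleft]
  ring

lemma tendstoUniformlyOn_energyFluxX (α : ℝ) {u : ℝ → ℝ × ℝ → ℝ} {S : Set (ℝ × ℝ)}
    (hdecay : ∀ i j : ℕ, i + j ≤ 4 →
      TendstoUniformlyOn (fun x (q : ℝ × ℝ) => pd i j (u q.1) (x, q.2)) 0 atTop S) :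
    TendstoUniformlyOn (fun x (q : ℝ × ℝ) => energyFluxX α (u q.1) (x, q.2)) 0 atTop S := by
  have h i j (hij : i + j ≤ 4) : Tendsto (fun z : ℝ × ℝ × ℝ => pd i j (u z.2.1) (z.1, z.2.2))
      (atTop ×ˢ 𝓟 S) (𝓝 0) := tendsto_prod_principal_iff.2 (hdecay i j hij)
  have h00 := h 0 0 (by norm_num)
  have h10 := h 1 0 (by norm_num)
  have h20 := h 2 0 (by norm_num)
  have flux := (((((((h00.pow 2).const_mul α).add ((h00.pow 3).const_mul (2 / 3))).add
    ((h00.mul h20).const_mul 2)).sub (h10.pow 2)).sub ((h 0 1 (by norm_num)).pow 2)).sub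
    (((h00.mul (h 4 0 (by norm_num))).sub (h10.mul (h 3 0 (by norm_num)))).const_mul 2)).sub
    (h20.pow 2)
  refine tendsto_prod_principal_iff.1 ?_
  simp only [ne_eq, OfNat.ofNat_ne_zero, not_false_eq_true, zero_pow, mul_zero, add_zero,
    sub_zero] at flux
  exact flux

lemma setIntegral_two_mul_of_eq_neg_kawaharaOp {α L R : ℝ} (hL : 0 ≤ L) (hR : 0 ≤ R)
    (hv : ContDiff ℝ ∞ v) (hwall : ∀ y ∈ Ioo 0 L, v (0, y) = 0 ∧ pd 1 0 v (0, y) = 0)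
    (hsides : ∀ x > 0, v (x, 0) = 0 ∧ v (x, L) = 0) {w : ℝ × ℝ → ℝ}
    (hw : ∀ p ∈ Ioi (0 : ℝ) ×ˢ Ioo 0 L, w p = -kawaharaOp α v p) :
    ∫ p in Icc 0 (R, L), 2 * v p * w p =
      -(∫ y in 0..L, energyFluxX α v (R, y)) - ∫ y in 0..L, pd 2 0 v (0, y) ^ 2 := by
  have hinterior := Icc_prod_ae_eq_Ioo_prod_Ioo 0 (R, L)
  calc ∫ p in Icc 0 (R, L), 2 * v p * w p
      = ∫ p in Icc 0 (R, L), -(2 * v p * kawaharaOp α v p) := by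
        rw [setIntegral_congr_set hinterior, setIntegral_congr_set hinterior]
        refine setIntegral_congr_fun (measurableSet_Ioo.prod measurableSet_Ioo) fun p hp => ?_
        simp only [hw p ⟨hp.1.1, hp.2⟩, mul_neg]
    _ = -(∫ y in 0..L, energyFluxX α v (R, y)) - ∫ y in 0..L, pd 2 0 v (0, y) ^ 2 := by
        rw [integral_neg, setIntegral_two_mul_kawaharaOp α hL hR hv hwall hsides]
        ring

variable {L T α : ℝ} {u : ℝ → ℝ × ℝ → ℝ}

lemma setIntegral_sq_sub_eq_of_kawahara (hL : 0 ≤ L) (hu : ContDiff ℝ ∞ (Function.uncurry u))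
    (heq : ∀ t ∈ Icc 0 T, ∀ p ∈ Ioi (0 : ℝ) ×ˢ Ioo 0 L,
      deriv (fun s => u s p) t = -kawaharaOp α (u t) p)
    (hwall : ∀ t ∈ Icc 0 T, ∀ y ∈ Ioo 0 L, u t (0, y) = 0 ∧ pd 1 0 (u t) (0, y) = 0)
    (hsides : ∀ t ∈ Icc 0 T, ∀ x > 0, u t (x, 0) = 0 ∧ u t (x, L) = 0)
    {t R : ℝ} (ht : t ∈ Icc 0 T) (hR : 0 ≤ R) :
    (∫ p in Icc 0 (R, L), u t p ^ 2) - ∫ p in Icc 0 (R, L), u 0 p ^ 2 =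
      -(∫ s in 0..t, ∫ y in 0..L, energyFluxX α (u s) (R, y)) -
        ∫ s in 0..t, ∫ y in 0..L, pd 2 0 (u s) (0, y) ^ 2 := by
  have hsq (s : ℝ) : IntegrableOn (fun p => u s p ^ 2) (Icc 0 (R, L)) :=
    ((contDiff_apply_of_uncurry hu s).continuous.pow 2).integrableOn_Icc
  have hrate (s : ℝ) (hs : s ∈ uIcc 0 t) :
      ∫ p in Icc 0 (R, L), 2 * u s p * deriv (fun s => u s p) s =
        -(∫ y in 0..L, energyFluxX α (u s) (R, y)) - ∫ y in 0..L, pd 2 0 (u s) (0, y) ^ 2 := by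
    rw [uIcc_of_le ht.1] at hs
    have hsT : s ∈ Icc 0 T := ⟨hs.1, hs.2.trans ht.2⟩
    exact setIntegral_two_mul_of_eq_neg_kawaharaOp hL hR (contDiff_apply_of_uncurry hu s)
      (hwall s hsT) (hsides s hsT) (heq s hsT)
  have hflux := continuous_intervalIntegral_vertical
    (contDiff_uncurry_energyFluxX α hu).continuous R 0 L
  have htrace := continuous_intervalIntegral_vertical
    (f := fun s p => pd 2 0 (u s) p ^ 2) ((contDiff_uncurry_pd hu 2 0).continuous.fun_pow 2) 0 0 L
  rw [setIntegral_sub_eq_intervalIntegral isCompact_Icc measurableSet_Icc (hsq 0) (hsq t)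
      (continuous_uncurry_two_mul_mul_deriv hu)
      (hasDerivAt_sq_of_uncurry (hu.differentiable (by simp))),
    intervalIntegral.integral_congr hrate, intervalIntegral.integral_sub
      (hflux.fun_neg.intervalIntegrable _ _) (htrace.intervalIntegrable _ _),
    intervalIntegral.integral_neg]

theorem kawahara_L2_identity_general (hL : 0 ≤ L)
    (hu : ContDiff ℝ ∞ (Function.uncurry u))
    (heq : ∀ t ∈ Icc 0 T, ∀ p ∈ Ioi (0 : ℝ) ×ˢ Ioo 0 L,
      deriv (fun s => u s p) t = -kawaharaOp α (u t) p)
    (hwall : ∀ t ∈ Icc 0 T, ∀ y ∈ Ioo 0 L, u t (0, y) = 0 ∧ pd 1 0 (u t) (0, y) = 0)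
    (hsides : ∀ t ∈ Icc 0 T, ∀ x > 0, u t (x, 0) = 0 ∧ u t (x, L) = 0)
    (hdecay : ∀ i j : ℕ, i + j ≤ 4 →
      TendstoUniformlyOn (fun x (q : ℝ × ℝ) => pd i j (u q.1) (x, q.2)) 0 atTop
        (Icc 0 T ×ˢ Icc 0 L))
    (hint : IntegrableOn (fun p => u 0 p ^ 2) (Ioi 0 ×ˢ Ioo 0 L))
    {t : ℝ} (ht : t ∈ Icc 0 T) :
    IntegrableOn (fun p => u t p ^ 2) (Ioi 0 ×ˢ Ioo 0 L) ∧
      (∫ p in Ioi 0 ×ˢ Ioo 0 L, u t p ^ 2) +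
          ∫ s in 0..t, ∫ y in 0..L, pd 2 0 (u s) (0, y) ^ 2 =
        ∫ p in Ioi 0 ×ˢ Ioo 0 L, u 0 p ^ 2 ∧
      ∫ p in Ioi 0 ×ˢ Ioo 0 L, u t p ^ 2 ≤ ∫ p in Ioi 0 ×ˢ Ioo 0 L, u 0 p ^ 2 := by
  set dissipation := ∫ s in 0..t, ∫ y in 0..L, pd 2 0 (u s) (0, y) ^ 2
  have hdissipation : 0 ≤ dissipation := intervalIntegral.integral_nonneg ht.1 fun s _ =>
    intervalIntegral.integral_nonneg hL fun y _ => sq_nonneg _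
  have hsub : uIcc 0 t ×ˢ uIcc 0 L ⊆ Icc 0 T ×ˢ Icc 0 L := by
    rw [uIcc_of_le ht.1, uIcc_of_le hL]
    exact prod_mono_left (Icc_subset_Icc_right ht.2)
  have hflux : Tendsto (fun R => ∫ s in 0..t, ∫ y in 0..L, energyFluxX α (u s) (R, y)) atTop
      (𝓝 0) := tendsto_intervalIntegral_intervalIntegral_zero
    ((tendstoUniformlyOn_energyFluxX α hdecay).mono hsub)
  have htrunc : Tendsto (fun R => ∫ p in Icc 0 (R, L), u t p ^ 2) atTop
      (𝓝 ((∫ p in Ioi 0 ×ˢ Ioo 0 L, u 0 p ^ 2) - 0 - dissipation)) := by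
    refine (((tendsto_setIntegral_Icc_halfStrip hint).sub hflux).sub_const _).congr' ?_
    filter_upwards [eventually_ge_atTop 0] with R hR
    linarith [setIntegral_sq_sub_eq_of_kawahara hL hu heq hwall hsides ht hR]
  obtain ⟨hintt, hlimit⟩ := integrableOn_halfStrip_and_setIntegral_eq_of_tendsto
    ((contDiff_apply_of_uncurry hu t).continuous.fun_pow 2) (fun p => sq_nonneg (u t p)) htrunc
  exact ⟨hintt, by linarith, by linarith⟩

end Energy

end

/-- L² energy identity for regular solutions of the 2D Kawahara equation on the
half-strip `D = (0,∞) × (0,L)` (Estimate I / identity (6.2)):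
`∫_D u(t)² + ∫₀^t ∫₀^L u_{xx}(s,0,y)² dy ds = ∫_D u(0)²`, and in particular
`∫_D u(t)² ≤ ∫_D u(0)²`. -/
theorem kawahara_L2_identity (L T α : ℝ) (hL : 0 < L) (hT : 0 < T)
    (hα : α = 0 ∨ α = 1)
    (D : Set (ℝ × ℝ)) (hD : D = Set.Ioi (0:ℝ) ×ˢ Set.Ioo 0 L)
    (u : ℝ → ℝ × ℝ → ℝ)
    (hu : ContDiff ℝ (⊤ : ℕ∞) (Function.uncurry u))
    (heq : ∀ t ∈ Set.Icc (0:ℝ) T, ∀ p ∈ D,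
      deriv (fun s => u s p) t + α * pdx (u t) p + u t p * pdx (u t) p +
        pd 3 0 (u t) p + pd 1 2 (u t) p - pd 5 0 (u t) p = 0)
    (hbc1 : ∀ t ∈ Set.Icc (0:ℝ) T, ∀ y ∈ Set.Ioo (0:ℝ) L,
      u t (0, y) = 0 ∧ pdx (u t) (0, y) = 0)
    (hbc2 : ∀ t ∈ Set.Icc (0:ℝ) T, ∀ x > (0:ℝ),
      u t (x, 0) = 0 ∧ u t (x, L) = 0)
    (hdec : ∀ i j : ℕ, i + j ≤ 5 →
      ∀ ε > 0, ∃ M : ℝ, ∀ x ≥ M, ∀ y : ℝ, ∀ t ∈ Set.Icc (0:ℝ) T,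
        |pd i j (u t) (x, y)| ≤ ε)
    (hint : ∀ i j : ℕ, i + j ≤ 5 →
      (∀ t ∈ Set.Icc (0:ℝ) T, IntegrableOn (fun p => (pd i j (u t) p) ^ 2) D) ∧
        ∃ C : ℝ, ∀ t ∈ Set.Icc (0:ℝ) T, (∫ p in D, (pd i j (u t) p) ^ 2) ≤ C) :
    ∀ t ∈ Set.Icc (0:ℝ) T,
      ((∫ p in D, (u t p) ^ 2) +
          ∫ s in (0:ℝ)..t, ∫ y in (0:ℝ)..L, (pd 2 0 (u s) (0, y)) ^ 2
        = ∫ p in D, (u 0 p) ^ 2) ∧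
      (∫ p in D, (u t p) ^ 2) ≤ ∫ p in D, (u 0 p) ^ 2 := by
  subst hD
  refine fun t ht => (kawahara_L2_identity_general (α := α) hL.le hu (fun t ht p hp => ?_) hbc1 hbc2
    (fun i j hij => Metric.tendstoUniformlyOn_iff.2 fun ε hε => ?_)
    ((hint 0 0 (by norm_num)).1 0 ⟨le_rfl, hT.le⟩) ht).2
  · have hpde := heq t ht p hp
    change _ = -(α * pdx (u t) p + u t p * pdx (u t) p + _ + _ - _)
    linarith
  · obtain ⟨M, hM⟩ := hdec i j (by omega) (ε / 2) (by positivity)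
    filter_upwards [Filter.eventually_ge_atTop M] with x hx q hq
    simpa using (hM x hx q.2 q.1 hq.1).trans_lt (half_lt_self hε)
end

section
/- Let L > 0, T > 0, and D = (0,∞) × (0,L). Let u : [0,T] × ℝ² → ℝ be smooth and satisfy u_t + u_x + u u_x + u_{xxx} + u_{xyy} − u_{xxxxx} = 0 on [0,T] × D, with boundary conditions u(t,0,y) = u_x(t,0,y) = 0 for y ∈ (0,L) and u(t,x,0) = u(t,x,L) = 0 for x > 0, and suppose that u and all its spatial partial derivatives up to order five tend to 0 as x → ∞ uniformly in y and t and are square-integrable over D uniformly in t. Then the functional E(t) = ∫_D (u_{xx}(t)² + u_x(t)² + u_y(t)²) dxdy − (1/3) ∫_D u(t)³ dxdy is nonincreasing in t; in particular E(t) ≤ E(0) for all t ∈ [0,T]. -/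
open MeasureTheory Real

open Set Filter Topology
open scoped ContDiff ENNReal

/-!
With `F = u_xxxx - u_xx - u_yy - u² / 2`, half the variational derivative of the energy, the
equation reads `u_t + u_x = F_x`. Multiplying by `2 F` turns the evolution of the energy density `e`
into an exact balance law `e_t = P_xx + Q_x + B_y`. The boundary conditions give `B = 0` on the
lateral sides and `P_x + Q = F² + u_xx² ≥ 0` at `x = 0`, so energy can only leave through the
boundary. None enters from infinity because `P` and `Q` are integrable over space-time: they are
quadratic in square-integrable derivatives, up to factors of `u`, which is bounded by a Sobolev
inequality involving only `u`, `u_x`, `u_y` and `u_xy`.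
-/

section DirectionalDerivative

variable {E F : Type*} [NormedAddCommGroup E] [NormedSpace ℝ E]
  [NormedAddCommGroup F] [NormedSpace ℝ F]

/-- The derivative of `f` in the fixed direction `v`, as a function of the base point. -/
noncomputable def dirDeriv (v : E) (f : E → F) : E → F :=
  fun q => fderiv ℝ f q v

theorem contDiff_dirDeriv {n m : WithTop ℕ∞} {f : E → F} (hf : ContDiff ℝ n f) (v : E)
    (hmn : m + 1 ≤ n) : ContDiff ℝ m (dirDeriv v f) :=
  (hf.fderiv_right hmn).clm_apply contDiff_const

theorem continuous_dirDeriv {f : E → F} (hf : ContDiff ℝ 1 f) (v : E) :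
    Continuous (dirDeriv v f) :=
  (contDiff_dirDeriv hf v (zero_add 1).le).continuous (n := 0)

@[fun_prop]
theorem smooth_dirDeriv {f : E → F} (hf : ContDiff ℝ ∞ f) (v : E) :
    ContDiff ℝ ∞ (dirDeriv v f) :=
  contDiff_dirDeriv hf v (by simp)

@[fun_prop]
theorem smooth_iterate_dirDeriv {f : E → F} (hf : ContDiff ℝ ∞ f) (v : E) (n : ℕ) :
    ContDiff ℝ ∞ ((dirDeriv v)^[n] f) := by
  induction n with
  | zero => exact hf
  | succ n ih => rw [Function.iterate_succ_apply']; exact smooth_dirDeriv ih v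

theorem dirDeriv_comm {f : E → F} (hf : ContDiff ℝ 2 f) (v w : E) :
    dirDeriv v (dirDeriv w f) = dirDeriv w (dirDeriv v f) := by
  have second_deriv (a b : E) (q : E) :
      dirDeriv a (dirDeriv b f) q = fderiv ℝ (fderiv ℝ f) q a b := by
    have hd : DifferentiableAt ℝ (fderiv ℝ f) q :=
      (hf.fderiv_right (m := 1) (by norm_num)).differentiable one_ne_zero q
    unfold dirDeriv
    rw [(hd.hasFDerivAt.clm_apply (hasFDerivAt_const b q)).fderiv]
    simp
  funext q
  rw [second_deriv, second_deriv]
  exact hf.contDiffAt.isSymmSndFDerivAt (by simp) v w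

theorem hasDerivAt_comp_dirDeriv {f : E → F} {γ : ℝ → E} {v : E} {s : ℝ}
    (hf : DifferentiableAt ℝ f (γ s)) (hγ : HasDerivAt γ v s) :
    HasDerivAt (fun s => f (γ s)) (dirDeriv v f (γ s)) s :=
  hf.hasFDerivAt.comp_hasDerivAt s hγ

theorem dirDeriv_add {f g : E → F} (hf : Differentiable ℝ f) (hg : Differentiable ℝ g) (v : E) :
    dirDeriv v (fun q => f q + g q) = fun q => dirDeriv v f q + dirDeriv v g q := by
  funext q
  simp [dirDeriv, fderiv_fun_add (hf q) (hg q)]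

theorem dirDeriv_sub {f g : E → F} (hf : Differentiable ℝ f) (hg : Differentiable ℝ g) (v : E) :
    dirDeriv v (fun q => f q - g q) = fun q => dirDeriv v f q - dirDeriv v g q := by
  funext q
  simp [dirDeriv, fderiv_fun_sub (hf q) (hg q)]

theorem dirDeriv_mul {f g : E → ℝ} (hf : Differentiable ℝ f) (hg : Differentiable ℝ g) (v : E) :
    dirDeriv v (fun q => f q * g q) = fun q => dirDeriv v f q * g q + f q * dirDeriv v g q := by
  funext q
  rw [dirDeriv, fderiv_fun_mul (hf q) (hg q)]
  simp only [dirDeriv, add_apply, smul_apply, smul_eq_mul]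
  ring

theorem dirDeriv_pow {f : E → ℝ} (hf : Differentiable ℝ f) (v : E) (n : ℕ) :
    dirDeriv v (fun q => f q ^ n) = fun q => n * f q ^ (n - 1) * dirDeriv v f q := by
  funext q
  simp [dirDeriv, fderiv_fun_pow n (hf q)]

theorem dirDeriv_const (v : E) (c : F) : dirDeriv v (fun _ => c) = fun _ => 0 := by
  funext q
  simp [dirDeriv]

end DirectionalDerivative

section CoordinateDerivatives

/-- `∂_t` on functions of `(t, x, y)`. -/
noncomputable abbrev Dt : (ℝ × ℝ × ℝ → ℝ) → ℝ × ℝ × ℝ → ℝ := dirDeriv (1, 0, 0)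

/-- `∂_x` on functions of `(t, x, y)`. -/
noncomputable abbrev Dx : (ℝ × ℝ × ℝ → ℝ) → ℝ × ℝ × ℝ → ℝ := dirDeriv (0, 1, 0)

/-- `∂_y` on functions of `(t, x, y)`. -/
noncomputable abbrev Dy : (ℝ × ℝ × ℝ → ℝ) → ℝ × ℝ × ℝ → ℝ := dirDeriv (0, 0, 1)

variable {f : ℝ × ℝ × ℝ → ℝ}

theorem hasDerivAt_Dt (hf : Differentiable ℝ f) (t x y : ℝ) :
    HasDerivAt (fun t => f (t, x, y)) (Dt f (t, x, y)) t :=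
  hasDerivAt_comp_dirDeriv (γ := fun t => (t, x, y)) (hf _)
    ((hasDerivAt_id t).prodMk ((hasDerivAt_const t x).prodMk (hasDerivAt_const t y)))

theorem hasDerivAt_Dx (hf : Differentiable ℝ f) (t x y : ℝ) :
    HasDerivAt (fun x => f (t, x, y)) (Dx f (t, x, y)) x :=
  hasDerivAt_comp_dirDeriv (γ := fun x => (t, x, y)) (hf _)
    ((hasDerivAt_const x t).prodMk ((hasDerivAt_id x).prodMk (hasDerivAt_const x y)))

theorem hasDerivAt_Dy (hf : Differentiable ℝ f) (t x y : ℝ) :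
    HasDerivAt (fun y => f (t, x, y)) (Dy f (t, x, y)) y :=
  hasDerivAt_comp_dirDeriv (γ := fun y => (t, x, y)) (hf _)
    ((hasDerivAt_const y t).prodMk ((hasDerivAt_const y x).prodMk (hasDerivAt_id y)))

theorem pdx_slice (hf : Differentiable ℝ f) (t : ℝ) :
    pdx (fun p => f (t, p)) = fun p => Dx f (t, p) :=
  funext fun p => (hasDerivAt_Dx hf t p.1 p.2).deriv

theorem pdy_slice (hf : Differentiable ℝ f) (t : ℝ) :
    pdy (fun p => f (t, p)) = fun p => Dy f (t, p) :=
  funext fun p => (hasDerivAt_Dy hf t p.1 p.2).deriv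

theorem pd_slice (hf : ContDiff ℝ ∞ f) (i j : ℕ) (t : ℝ) :
    pd i j (fun p => f (t, p)) = fun p => Dx^[i] (Dy^[j] f) (t, p) := by
  have hy : pdy^[j] (fun p => f (t, p)) = fun p => Dy^[j] f (t, p) := by
    induction j with
    | zero => rfl
    | succ j ih =>
      rw [Function.iterate_succ_apply', ih, Function.iterate_succ_apply', pdy_slice]
      exact ContDiff.differentiable (by fun_prop) (by simp : (∞ : WithTop ℕ∞) ≠ 0)
  rw [pd, hy]
  induction i with
  | zero => rfl
  | succ i ih =>
    rw [Function.iterate_succ_apply', ih, Function.iterate_succ_apply', pdx_slice]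
    exact ContDiff.differentiable (by fun_prop) (by simp : (∞ : WithTop ℕ∞) ≠ 0)

theorem eq_zero_of_hasDerivAt_of_eqOn_zero {g : ℝ → ℝ} {g' r : ℝ} {s : Set ℝ} (hs : IsOpen s)
    (hr : r ∈ s) (hg : HasDerivAt g g' r) (hzero : EqOn g 0 s) : g' = 0 :=
  hg.unique <| (hasDerivAt_const r 0).congr_of_eventuallyEq <|
    hzero.eventuallyEq_of_mem (hs.mem_nhds hr)

end CoordinateDerivatives

section HalfLine

theorem tendsto_forward_difference {f f' : ℝ → ℝ} {ℓ : ℝ}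
    (hf : ∀ᶠ x in atTop, HasDerivAt f (f' x) x) (hℓ : Tendsto f' atTop (𝓝 ℓ)) :
    Tendsto (fun x => f (x + 1) - f x) atTop (𝓝 ℓ) := by
  obtain ⟨N, hN⟩ := eventually_atTop.1 hf
  have mean_value (x : ℝ) : ∃ c ≥ x, N ≤ x → f (x + 1) - f x = f' c := by
    by_cases hx : N ≤ x
    · obtain ⟨c, hc, hslope⟩ := exists_hasDerivAt_eq_slope f f' (lt_add_one x)
        (fun z hz => (hN z (hx.trans hz.1)).continuousAt.continuousWithinAt)
        (fun z hz => hN z (hx.trans hz.1.le))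
      exact ⟨c, hc.1.le, fun _ => by simp [hslope]⟩
    · exact ⟨x, le_rfl, fun h => absurd h hx⟩
  choose c hcx hc using mean_value
  refine (hℓ.comp (tendsto_atTop_mono hcx tendsto_id)).congr' ?_
  filter_upwards [eventually_ge_atTop N] with x hx using (hc x hx).symm

theorem eq_zero_of_tendsto_forward_difference {f : ℝ → ℝ} {a ℓ : ℝ}
    (hf : IntegrableOn f (Ioi a)) (hℓ : Tendsto (fun x => f (x + 1) - f x) atTop (𝓝 ℓ)) :
    ℓ = 0 := by
  have shifted : IntegrableOn (fun x => f (x + 1)) (Ioi a) := by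
    have hf_tail : IntegrableOn f (Ioi (a + 1)) :=
      hf.mono_set (Ioi_subset_Ioi (le_add_of_nonneg_right zero_le_one))
    simpa [Function.comp_def] using ((measurePreserving_add_right volume
      (1 : ℝ)).integrableOn_comp_preimage (measurableEmbedding_addRight 1)).2 hf_tail
  refine IntegrableAtFilter.eq_zero_of_tendsto ⟨Ioi a, Ioi_mem_atTop a, shifted.sub hf⟩
    (fun s hs => ?_) hℓ
  obtain ⟨b, hb⟩ := mem_atTop_sets.1 hs
  exact top_le_iff.1 (volume_Ici.symm.le.trans (measure_mono hb))

theorem integral_Ioi_eq_neg_of_hasDerivAt {p q A h : ℝ → ℝ} {a : ℝ} (hq : Continuous q)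
    (hp : ∀ x ≥ a, HasDerivAt p (A x - q x) x) (hA : ∀ x ≥ a, HasDerivAt A (h x) x)
    (hp_int : IntegrableOn p (Ioi a)) (hq_int : IntegrableOn q (Ioi a))
    (hh_int : IntegrableOn h (Ioi a)) : ∫ x in Ioi a, h x = -A a := by
  have hA_lim : Tendsto A atTop (𝓝 (limUnder atTop A)) :=
    tendsto_limUnder_of_hasDerivAt_of_integrableOn_Ioi (fun x hx => hA x (le_of_lt hx)) hh_int
  -- `p + ∫ q` is a primitive of `A`, so its unit increments tend to `lim A`, while those of `∫ q`
  -- tend to `0`; a nonzero limit of the increments of `p` would contradict its integrability.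
  set Q : ℝ → ℝ := fun x => ∫ s in a..x, q s
  have hQ (x : ℝ) : HasDerivAt Q (q x) x := hq.integral_hasStrictDerivAt a x |>.hasDerivAt
  have hQ_lim : Tendsto Q atTop (𝓝 (∫ s in Ioi a, q s)) :=
    intervalIntegral_tendsto_integral_Ioi a hq_int tendsto_id
  have hpQ_diff : Tendsto (fun x => (p (x + 1) + Q (x + 1)) - (p x + Q x)) atTop
      (𝓝 (limUnder atTop A)) := by
    refine tendsto_forward_difference (f := fun x => p x + Q x) ?_ hA_lim
    filter_upwards [eventually_ge_atTop a] with x hx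
    simpa only [sub_add_cancel] using (hp x hx).fun_add (hQ x)
  have hQ_diff : Tendsto (fun x => Q (x + 1) - Q x) atTop (𝓝 0) := by
    simpa using (hQ_lim.comp (tendsto_atTop_add_const_right _ 1 tendsto_id)).sub hQ_lim
  have hA_zero : limUnder atTop A = 0 := by
    refine eq_zero_of_tendsto_forward_difference hp_int ?_
    simpa using (hpQ_diff.sub hQ_diff).congr fun x => by ring
  rw [integral_Ioi_of_hasDerivAt_of_tendsto' hA hh_int hA_lim, hA_zero, zero_sub]

end HalfLine

section ParametricIntegral

theorem hasDerivAt_setIntegral_of_continuous {X : Type*} [TopologicalSpace X] [MeasurableSpace X]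
    [OpensMeasurableSpace X] {μ : Measure X} [IsFiniteMeasureOnCompacts μ] {K Z : Set X}
    (hK : IsCompact K) (hZK : Z ⊆ K) (hZ : MeasurableSet Z) {f f' : ℝ → X → ℝ}
    (hf : Continuous ↿f) (hf' : Continuous ↿f') (hderiv : ∀ x z, HasDerivAt (f · z) (f' x z) x)
    (x₀ : ℝ) :
    HasDerivAt (fun x => ∫ z in Z, f x z ∂μ) (∫ z in Z, f' x₀ z ∂μ) x₀ := by
  have slice_integrable {g : ℝ → X → ℝ} (hg : Continuous ↿g) (x : ℝ) :
      IntegrableOn (g x) Z μ :=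
    (hg.comp (Continuous.prodMk_right x)).continuousOn.integrableOn_of_subset_isCompact hK hZ hZK
      (ne_top_of_le_ne_top hK.measure_lt_top.ne (measure_mono hZK))
  obtain ⟨C, hC⟩ := ((isCompact_closedBall x₀ 1).prod hK).exists_bound_of_continuousOn
    hf'.continuousOn
  have hball : Metric.ball x₀ 1 ∈ 𝓝 x₀ := Metric.ball_mem_nhds x₀ one_pos
  refine (hasDerivAt_integral_of_dominated_loc_of_deriv_le (bound := fun _ => C) hball
    (.of_forall fun x => (slice_integrable hf x).aestronglyMeasurable) (slice_integrable hf x₀)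
    (slice_integrable hf' x₀).aestronglyMeasurable ?_ ?_ ?_).2
  · filter_upwards [ae_restrict_mem hZ] with z hz x hx
    exact hC (x, z) ⟨Metric.ball_subset_closedBall hx, hZK hz⟩
  · exact integrableOn_const (hK.measure_lt_top.ne |> ne_top_of_le_ne_top <| measure_mono hZK)
  · exact .of_forall fun z x _ => hderiv x z

end ParametricIntegral

section SectionIntegral

theorem measurePreserving_prod_left_comm {X Y Z : Type*} [MeasurableSpace X] [MeasurableSpace Y]
    [MeasurableSpace Z] (μ : Measure X) (ν : Measure Y) (ρ : Measure Z) [SFinite μ] [SFinite ν]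
    [SFinite ρ] :
    MeasurePreserving (fun q : X × Y × Z => (q.2.1, q.1, q.2.2)) (μ.prod (ν.prod ρ))
      (ν.prod (μ.prod ρ)) :=
  (measurePreserving_prodAssoc ν μ ρ).comp <|
    (Measure.measurePreserving_swap.prod (.id ρ)).comp
      (measurePreserving_prodAssoc μ ν ρ).symm

/-- The integral of `f (t, x, y)` over `t ∈ (a, b)` and `y ∈ (c, d)`, as a function of `x`. -/
noncomputable def sectionIntegral (a b c d : ℝ) (f : ℝ × ℝ × ℝ → ℝ) : ℝ → ℝ :=
  fun x => ∫ z in Ioo a b ×ˢ Ioo c d, f (z.1, x, z.2)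

variable {a b c d : ℝ} {f : ℝ × ℝ × ℝ → ℝ}

theorem hasDerivAt_sectionIntegral (hf : ContDiff ℝ 1 f) (x : ℝ) :
    HasDerivAt (sectionIntegral a b c d f) (sectionIntegral a b c d (Dx f) x) x := by
  have hDx : Continuous (Dx f) := continuous_dirDeriv hf _
  refine hasDerivAt_setIntegral_of_continuous (K := Icc a b ×ˢ Icc c d)
    (f := fun x z => f (z.1, x, z.2)) (f' := fun x z => Dx f (z.1, x, z.2))
    (isCompact_Icc.prod isCompact_Icc) (prod_mono Ioo_subset_Icc_self Ioo_subset_Icc_self)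
    (measurableSet_Ioo.prod measurableSet_Ioo)
    (hf.continuous.comp (by fun_prop : Continuous fun w : ℝ × ℝ × ℝ => (w.2.1, w.1, w.2.2)))
    (hDx.comp (by fun_prop : Continuous fun w : ℝ × ℝ × ℝ => (w.2.1, w.1, w.2.2)))
    (fun x z => ?_) x
  exact hasDerivAt_Dx (hf.differentiable one_ne_zero) z.1 x z.2

theorem integrableOn_sectionIntegral {s : Set ℝ}
    (hf : IntegrableOn f (Ioo a b ×ˢ s ×ˢ Ioo c d)) :
    IntegrableOn (sectionIntegral a b c d f) s := by
  have hf' : Integrable f ((volume.restrict (Ioo a b)).prod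
      ((volume.restrict s).prod (volume.restrict (Ioo c d)))) := by
    rwa [Measure.prod_restrict, Measure.prod_restrict]
  have := ((measurePreserving_prod_left_comm _ _ _).integrable_comp hf'.aestronglyMeasurable).2 hf'
  refine this.integral_prod_left.congr (.of_forall fun x => ?_)
  simp only [sectionIntegral, Measure.volume_eq_prod, Measure.prod_restrict, Function.comp_apply]

theorem integrableOn_box {g : ℝ × ℝ → ℝ} (hg : Continuous g) :
    IntegrableOn g (Ioo a b ×ˢ Ioo c d) :=
  (hg.continuousOn.integrableOn_compact (isCompact_Icc.prod isCompact_Icc)).mono_set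
    (prod_mono Ioo_subset_Icc_self Ioo_subset_Icc_self)

theorem sectionIntegral_Dy (hcd : c ≤ d) (hf : ContDiff ℝ 1 f) (x : ℝ) :
    sectionIntegral a b c d (Dy f) x = ∫ t in Ioo a b, (f (t, x, d) - f (t, x, c)) := by
  have hDy : Continuous (Dy f) := continuous_dirDeriv hf _
  rw [sectionIntegral, Measure.volume_eq_prod, setIntegral_prod _ (integrableOn_box (by fun_prop))]
  congr with t
  rw [← integral_Ioc_eq_integral_Ioo, ← intervalIntegral.integral_of_le hcd]
  exact intervalIntegral.integral_eq_sub_of_hasDerivAt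
    (fun y _ => hasDerivAt_Dy (hf.differentiable one_ne_zero) t x y)
    (Continuous.intervalIntegrable (by fun_prop) _ _)

theorem sectionIntegral_Dt (hab : a ≤ b) (hf : ContDiff ℝ 1 f) (x : ℝ) :
    sectionIntegral a b c d (Dt f) x = ∫ y in Ioo c d, (f (b, x, y) - f (a, x, y)) := by
  have hDt : Continuous (Dt f) := continuous_dirDeriv hf _
  rw [sectionIntegral, Measure.volume_eq_prod, ← setIntegral_prod_swap,
    setIntegral_prod _ (integrableOn_box (by fun_prop))]
  congr with y
  simp only [Prod.swap_prod_mk]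
  rw [← integral_Ioc_eq_integral_Ioo, ← intervalIntegral.integral_of_le hab]
  exact intervalIntegral.integral_eq_sub_of_hasDerivAt
    (fun t _ => hasDerivAt_Dt (hf.differentiable one_ne_zero) t x y)
    (Continuous.intervalIntegrable (by fun_prop) _ _)

theorem integral_sub_eq_integral_sectionIntegral_Dt {s : Set ℝ} (hab : a ≤ b)
    (hf : ContDiff ℝ 1 f) (ha : IntegrableOn (fun p => f (a, p)) (s ×ˢ Ioo c d))
    (hb : IntegrableOn (fun p => f (b, p)) (s ×ˢ Ioo c d)) :
    (∫ p in s ×ˢ Ioo c d, f (b, p)) - ∫ p in s ×ˢ Ioo c d, f (a, p) =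
      ∫ x in s, sectionIntegral a b c d (Dt f) x := by
  rw [← integral_sub hb ha]
  simp only [sectionIntegral_Dt hab hf]
  exact setIntegral_prod _ (hb.sub ha)

theorem integrableOn_sectionIntegral_Dt {s : Set ℝ} (hab : a ≤ b)
    (hf : ContDiff ℝ 1 f) (ha : IntegrableOn (fun p => f (a, p)) (s ×ˢ Ioo c d))
    (hb : IntegrableOn (fun p => f (b, p)) (s ×ˢ Ioo c d)) :
    IntegrableOn (sectionIntegral a b c d (Dt f)) s := by
  have hsub : Integrable (fun p => f (b, p) - f (a, p))
      ((volume.restrict s).prod (volume.restrict (Ioo c d))) := by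
    rw [Measure.prod_restrict]
    exact hb.sub ha
  exact hsub.integral_prod_left.congr (.of_forall fun x => (sectionIntegral_Dt hab hf x).symm)

theorem sectionIntegral_add {g : ℝ × ℝ × ℝ → ℝ} (hf : Continuous f) (hg : Continuous g) (x : ℝ) :
    sectionIntegral a b c d (fun q => f q + g q) x =
      sectionIntegral a b c d f x + sectionIntegral a b c d g x :=
  integral_add (integrableOn_box (by fun_prop)) (integrableOn_box (by fun_prop))

end SectionIntegral

/-- The half-strip `(0, ∞) × (0, L)`. -/
abbrev halfStrip (L : ℝ) : Set (ℝ × ℝ) := Ioi 0 ×ˢ Ioo 0 L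

theorem integral_le_of_balance_law {a b L : ℝ} {e P Q B : ℝ × ℝ × ℝ → ℝ}
    (hab : a ≤ b) (hL : 0 ≤ L) (he : ContDiff ℝ 1 e) (hP : ContDiff ℝ 2 P) (hQ : ContDiff ℝ 1 Q)
    (hB : ContDiff ℝ 1 B)
    (balance : ∀ t ∈ Ioo a b, ∀ x > 0, ∀ y ∈ Ioo 0 L,
      Dt e (t, x, y) = Dx (Dx P) (t, x, y) + Dx Q (t, x, y) + Dy B (t, x, y))
    (inflow : ∀ t ∈ Ioo a b, ∀ y ∈ Ioo 0 L, 0 ≤ Dx P (t, 0, y) + Q (t, 0, y))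
    (lateral : ∀ t ∈ Ioo a b, ∀ x > 0, B (t, x, 0) = B (t, x, L))
    (ha_int : IntegrableOn (fun p => e (a, p)) (halfStrip L))
    (hb_int : IntegrableOn (fun p => e (b, p)) (halfStrip L))
    (hP_int : IntegrableOn P (Ioo a b ×ˢ halfStrip L))
    (hQ_int : IntegrableOn Q (Ioo a b ×ˢ halfStrip L)) :
    ∫ p in halfStrip L, e (b, p) ≤ ∫ p in halfStrip L, e (a, p) := by
  set S := sectionIntegral a b 0 L
  have hDxP : ContDiff ℝ 1 (Dx P) := contDiff_dirDeriv hP _ (by norm_num)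
  set A : ℝ × ℝ × ℝ → ℝ := fun q => Dx P q + Q q
  have hA : ContDiff ℝ 1 A := hDxP.add hQ
  have section_rate {x : ℝ} (hx : 0 < x) : S (Dt e) x = S (Dx A) x := by
    have lateral_zero : S (Dy B) x = 0 := by
      rw [show S = sectionIntegral a b 0 L from rfl, sectionIntegral_Dy hL hB]
      exact setIntegral_eq_zero_of_forall_eq_zero fun t ht => sub_eq_zero.2 (lateral t ht x hx).symm
    calc S (Dt e) x = S (fun q => Dx A q + Dy B q) x :=
          setIntegral_congr_fun (measurableSet_Ioo.prod measurableSet_Ioo) fun z hz => by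
            simp only [A, dirDeriv_add (hDxP.differentiable one_ne_zero)
              (hQ.differentiable one_ne_zero)]
            exact balance _ hz.1 x hx _ hz.2
      _ = S (Dx A) x + S (Dy B) x :=
          sectionIntegral_add (continuous_dirDeriv hA _) (continuous_dirDeriv hB _) x
      _ = S (Dx A) x := by rw [lateral_zero, add_zero]
  have hS_rate : IntegrableOn (S (Dx A)) (Ioi 0) :=
    (integrableOn_sectionIntegral_Dt hab he ha_int hb_int).congr_fun (fun x hx => section_rate hx)
      measurableSet_Ioi
  have hS_P (x : ℝ) : HasDerivAt (S P) (S A x - S Q x) x := by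
    have hS_A : S A x = S (Dx P) x + S Q x :=
      sectionIntegral_add hDxP.continuous hQ.continuous x
    rw [hS_A, add_sub_cancel_right]
    exact hasDerivAt_sectionIntegral (hP.of_le (by norm_num)) x
  have total : ∫ x in Ioi 0, S (Dt e) x = -S A 0 := by
    rw [setIntegral_congr_fun measurableSet_Ioi fun x hx => section_rate hx]
    exact integral_Ioi_eq_neg_of_hasDerivAt
      (continuous_iff_continuousAt.2 fun x => (hasDerivAt_sectionIntegral hQ x).continuousAt)
      (fun x _ => hS_P x) (fun x _ => hasDerivAt_sectionIntegral hA x)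
      (integrableOn_sectionIntegral hP_int) (integrableOn_sectionIntegral hQ_int) hS_rate
  have inflow_nonneg : 0 ≤ S A 0 :=
    setIntegral_nonneg (measurableSet_Ioo.prod measurableSet_Ioo) fun z hz => inflow _ hz.1 _ hz.2
  linarith [integral_sub_eq_integral_sectionIntegral_Dt hab he ha_int hb_int]

section Sobolev

theorem sq_le_integral_sq_add_sq {f f' : ℝ → ℝ} {a b c : ℝ} (hb : b ∈ Icc a c) (ha : f a = 0)
    (hf : ∀ x, HasDerivAt f (f' x) x) (hf' : Continuous f') :
    f b ^ 2 ≤ ∫ x in Ioo a c, (f x ^ 2 + f' x ^ 2) := by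
  have hfc : Continuous f := continuous_iff_continuousAt.2 fun x => (hf x).continuousAt
  calc f b ^ 2 = ∫ x in a..b, 2 * f x * f' x := by
        rw [intervalIntegral.integral_eq_sub_of_hasDerivAt (f := fun x => f x ^ 2)
          (fun x _ => by simpa using (hf x).fun_pow 2)
          (Continuous.intervalIntegrable (by fun_prop) _ _), ha]
        ring
    _ ≤ ∫ x in a..b, (f x ^ 2 + f' x ^ 2) :=
        intervalIntegral.integral_mono hb.1 (Continuous.intervalIntegrable (by fun_prop) _ _)
          (Continuous.intervalIntegrable (by fun_prop) _ _) fun x => two_mul_le_add_sq _ _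
    _ ≤ ∫ x in a..c, (f x ^ 2 + f' x ^ 2) :=
        intervalIntegral.integral_mono_interval le_rfl hb.1 hb.2
          (.of_forall fun x => by positivity) (Continuous.intervalIntegrable (by fun_prop) _ _)
    _ = ∫ x in Ioo a c, (f x ^ 2 + f' x ^ 2) := by
        rw [intervalIntegral.integral_of_le (hb.1.trans hb.2), integral_Ioc_eq_integral_Ioo]

theorem hasDerivAt_pdx {f : ℝ × ℝ → ℝ} (hf : Differentiable ℝ f) (x y : ℝ) :
    HasDerivAt (fun x => f (x, y)) (pdx f (x, y)) x :=
  (hf.comp (by fun_prop : Differentiable ℝ fun x : ℝ => (x, y)) x).hasDerivAt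

theorem hasDerivAt_pdy {f : ℝ × ℝ → ℝ} (hf : Differentiable ℝ f) (x y : ℝ) :
    HasDerivAt (fun y => f (x, y)) (pdy f (x, y)) y :=
  (hf.comp (by fun_prop : Differentiable ℝ fun y : ℝ => (x, y)) y).hasDerivAt

theorem pdx_eq_dirDeriv {f : ℝ × ℝ → ℝ} (hf : Differentiable ℝ f) : pdx f = dirDeriv (1, 0) f :=
  funext fun p => (hasDerivAt_comp_dirDeriv (hf p)
    ((hasDerivAt_id p.1).prodMk (hasDerivAt_const p.1 p.2))).deriv

theorem pdy_eq_dirDeriv {f : ℝ × ℝ → ℝ} (hf : Differentiable ℝ f) : pdy f = dirDeriv (0, 1) f :=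
  funext fun p => (hasDerivAt_comp_dirDeriv (hf p)
    ((hasDerivAt_const p.2 p.1).prodMk (hasDerivAt_id p.2))).deriv

theorem contDiff_pdx {n m : WithTop ℕ∞} {f : ℝ × ℝ → ℝ} (hf : ContDiff ℝ n f)
    (hmn : m + 1 ≤ n) : ContDiff ℝ m (pdx f) := by
  rw [pdx_eq_dirDeriv ((hf.of_le (le_add_self.trans hmn)).differentiable one_ne_zero)]
  exact contDiff_dirDeriv hf _ hmn

theorem contDiff_pdy {n m : WithTop ℕ∞} {f : ℝ × ℝ → ℝ} (hf : ContDiff ℝ n f)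
    (hmn : m + 1 ≤ n) : ContDiff ℝ m (pdy f) := by
  rw [pdy_eq_dirDeriv ((hf.of_le (le_add_self.trans hmn)).differentiable one_ne_zero)]
  exact contDiff_dirDeriv hf _ hmn

theorem sq_le_integral_of_eq_zero_on_boundary {L : ℝ} {f : ℝ × ℝ → ℝ} (hf : ContDiff ℝ 2 f)
    (left : ∀ y ∈ Ioo 0 L, f (0, y) = 0) (bottom : ∀ x > 0, f (x, 0) = 0)
    (hint : IntegrableOn (fun p => f p ^ 2 + pdx f p ^ 2 + (pdy f p ^ 2 + pdx (pdy f) p ^ 2))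
      (halfStrip L)) {p : ℝ × ℝ} (hp : p ∈ halfStrip L) :
    f p ^ 2 ≤ ∫ p in halfStrip L,
      (f p ^ 2 + pdx f p ^ 2 + (pdy f p ^ 2 + pdx (pdy f) p ^ 2)) := by
  obtain ⟨x, y⟩ := p
  have hfd : Differentiable ℝ f := hf.differentiable two_ne_zero
  have hfy : ContDiff ℝ 1 (pdy f) := contDiff_pdy hf (by norm_num)
  have hfyd : Differentiable ℝ (pdy f) := hfy.differentiable one_ne_zero
  have hf_cont := hf.continuous
  have hfx_cont : Continuous (pdx f) := (contDiff_pdx hf (m := 1) (by norm_num)).continuous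
  have hfy_cont := hfy.continuous
  have hfxy_cont : Continuous (pdx (pdy f)) :=
    (contDiff_pdx hfy (zero_add 1).le).continuous (n := 0)
  have left_pdy (s : ℝ) (hs : s ∈ Ioo 0 L) : pdy f (0, s) = 0 :=
    eq_zero_of_hasDerivAt_of_eqOn_zero isOpen_Ioo hs (hasDerivAt_pdy hfd 0 s) left
  set Φ : ℝ × ℝ → ℝ := fun p => f p ^ 2 + pdx f p ^ 2 + (pdy f p ^ 2 + pdx (pdy f) p ^ 2)
  have hΦ : Integrable Φ ((volume.restrict (Ioo 0 x)).prod (volume.restrict (Ioo 0 L))) := by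
    rw [Measure.prod_restrict]
    exact integrableOn_box (by fun_prop)
  have integrable_Ioo {g : ℝ → ℝ} (hg : Continuous g) (c : ℝ) : IntegrableOn g (Ioo 0 c) :=
    hg.integrableOn_Icc.mono_set Ioo_subset_Icc_self
  have row_bound (s : ℝ) (hs : s ∈ Ioo 0 L) :
      f (x, s) ^ 2 + pdy f (x, s) ^ 2 ≤ ∫ r in Ioo 0 x, Φ (r, s) := by
    have hx : x ∈ Icc 0 x := right_mem_Icc.2 hp.1.le
    rw [integral_add (integrable_Ioo (by fun_prop) x) (integrable_Ioo (by fun_prop) x)]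
    exact add_le_add
      (sq_le_integral_sq_add_sq hx (left s hs) (hasDerivAt_pdx hfd · s) (by fun_prop))
      (sq_le_integral_sq_add_sq hx (left_pdy s hs) (hasDerivAt_pdx hfyd · s) (by fun_prop))
  calc f (x, y) ^ 2 ≤ ∫ s in Ioo 0 L, (f (x, s) ^ 2 + pdy f (x, s) ^ 2) :=
        sq_le_integral_sq_add_sq (Ioo_subset_Icc_self hp.2) (bottom x hp.1) (hasDerivAt_pdy hfd x)
          (by fun_prop)
    _ ≤ ∫ s in Ioo 0 L, ∫ r in Ioo 0 x, Φ (r, s) :=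
        setIntegral_mono_on (integrable_Ioo (by fun_prop) L) hΦ.integral_prod_right
          measurableSet_Ioo row_bound
    _ = ∫ p in Ioo 0 x ×ˢ Ioo 0 L, Φ p := by
        rw [← integral_prod_symm _ hΦ, Measure.prod_restrict]; rfl
    _ ≤ ∫ p in halfStrip L, Φ p :=
        setIntegral_mono_set hint (.of_forall fun p => by positivity)
          (prod_mono Ioo_subset_Ioi_self subset_rfl).eventuallyLE

end Sobolev

section SquareIntegrable

theorem memLp_two_prod_of_integral_sq_le {X Y : Type*} [MeasurableSpace X] [MeasurableSpace Y]
    {μ : Measure X} {ν : Measure Y} [IsFiniteMeasure μ] [SFinite ν] {f : X × Y → ℝ} {C : ℝ}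
    (hf : AEStronglyMeasurable f (μ.prod ν))
    (hint : ∀ᵐ t ∂μ, Integrable (fun p => f (t, p) ^ 2) ν)
    (hC : ∀ᵐ t ∂μ, ∫ p, f (t, p) ^ 2 ∂ν ≤ C) : MemLp f 2 (μ.prod ν) := by
  have hf_sq : AEStronglyMeasurable (fun q => f q ^ 2) (μ.prod ν) := hf.pow 2
  have norm_sq (q : X × Y) : ‖f q ^ 2‖ = f q ^ 2 := Real.norm_of_nonneg (sq_nonneg _)
  refine (memLp_two_iff_integrable_sq hf).2 ((integrable_prod_iff hf_sq).2 ⟨hint, ?_⟩)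
  simp only [norm_sq]
  refine (integrable_const C).mono' hf_sq.integral_prod_right' (hC.mono fun t ht => ?_)
  rwa [Real.norm_of_nonneg (integral_nonneg fun _ => sq_nonneg _)]

end SquareIntegrable

section Kawahara

/-- The energy density `u_xx² + u_x² + u_y² - u³ / 3` of the Kawahara equation, on space-time. -/
noncomputable def energyDensity (U : ℝ × ℝ × ℝ → ℝ) : ℝ × ℝ × ℝ → ℝ :=
  fun q => Dx^[2] U q ^ 2 + Dx U q ^ 2 + Dy U q ^ 2 - (1 / 3) * U q ^ 3

/-- Half the variational derivative `F = u_xxxx - u_xx - u_yy - u² / 2` of the energy; the Kawahara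
equation reads `u_t + u_x = ∂_x F`. -/
noncomputable def energyGradient (U : ℝ × ℝ × ℝ → ℝ) : ℝ × ℝ × ℝ → ℝ :=
  fun q => Dx^[4] U q - Dx^[2] U q - Dy^[2] U q - (1 / 2) * U q ^ 2

/-- The flux `P` entering the energy balance `e_t = P_xx + Q_x + B_y` through its second
derivative. -/
noncomputable def secondOrderFlux (U : ℝ × ℝ × ℝ → ℝ) : ℝ × ℝ × ℝ → ℝ :=
  fun q => 2 * (Dx^[2] U q * Dt U q)

/-- The flux `Q` in the `x` direction of the energy balance `e_t = P_xx + Q_x + B_y`. -/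
noncomputable def longitudinalFlux (U : ℝ × ℝ × ℝ → ℝ) : ℝ × ℝ × ℝ → ℝ :=
  fun q => 2 * ((Dx U q - 2 * Dx^[3] U q) * Dt U q) + energyGradient U q ^ 2
    - 2 * (Dx U q * Dx^[3] U q) + Dx^[2] U q ^ 2 + Dx U q ^ 2 - Dy U q ^ 2 + (1 / 3) * U q ^ 3

/-- The flux `B` in the `y` direction of the energy balance `e_t = P_xx + Q_x + B_y`. -/
noncomputable def transverseFlux (U : ℝ × ℝ × ℝ → ℝ) : ℝ × ℝ × ℝ → ℝ :=
  fun q => 2 * (Dy U q * (Dt U q + Dx U q))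

theorem smooth_energyDensity {U : ℝ × ℝ × ℝ → ℝ} (hU : ContDiff ℝ ∞ U) :
    ContDiff ℝ ∞ (energyDensity U) := by
  unfold energyDensity
  fun_prop

theorem smooth_secondOrderFlux {U : ℝ × ℝ × ℝ → ℝ} (hU : ContDiff ℝ ∞ U) :
    ContDiff ℝ ∞ (secondOrderFlux U) := by
  unfold secondOrderFlux
  fun_prop

theorem smooth_longitudinalFlux {U : ℝ × ℝ × ℝ → ℝ} (hU : ContDiff ℝ ∞ U) :
    ContDiff ℝ ∞ (longitudinalFlux U) := by
  unfold longitudinalFlux energyGradient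
  fun_prop

theorem smooth_transverseFlux {U : ℝ × ℝ × ℝ → ℝ} (hU : ContDiff ℝ ∞ U) :
    ContDiff ℝ ∞ (transverseFlux U) := by
  unfold transverseFlux
  fun_prop

theorem energy_balance {U : ℝ × ℝ × ℝ → ℝ} (hU : ContDiff ℝ ∞ U) {q : ℝ × ℝ × ℝ}
    (heq : Dt U q + Dx U q + U q * Dx U q + Dx^[3] U q + Dx (Dy^[2] U) q - Dx^[5] U q = 0) :
    Dt (energyDensity U) q =
      Dx (Dx (secondOrderFlux U)) q + Dx (longitudinalFlux U) q + Dy (transverseFlux U) q := by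
  have hd {f : ℝ × ℝ × ℝ → ℝ} (hf : ContDiff ℝ ∞ f) : Differentiable ℝ f :=
    hf.differentiable (by simp)
  have hc {f : ℝ × ℝ × ℝ → ℝ} (hf : ContDiff ℝ ∞ f) : ContDiff ℝ 2 f :=
    hf.of_le ENat.LEInfty.out
  have htx : Dt (Dx U) = Dx (Dt U) := dirDeriv_comm (hc hU) _ _
  have htxx : Dt (Dx (Dx U)) = Dx (Dx (Dt U)) := by
    rw [← htx]; exact dirDeriv_comm (hc (by fun_prop)) _ _
  have hty : Dt (Dy U) = Dy (Dt U) := dirDeriv_comm (hc hU) _ _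
  have hyx : Dy (Dx U) = Dx (Dy U) := dirDeriv_comm (hc hU) _ _
  have heq' : Dt U q = Dx^[5] U q - Dx^[3] U q - Dx (Dy^[2] U) q - Dx U q - U q * Dx U q := by
    linear_combination heq
  simp only [Function.iterate_succ, Function.iterate_zero, Function.comp_apply, id] at heq'
  unfold energyDensity secondOrderFlux longitudinalFlux transverseFlux energyGradient
  simp only [Function.iterate_succ, Function.iterate_zero, Function.comp_apply, id]
  simp (disch := first | fun_prop | (apply hd; fun_prop)) only [dirDeriv_add, dirDeriv_sub,
    dirDeriv_mul, dirDeriv_pow, dirDeriv_const, htx, htxx, hty, hyx, heq']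
  simp only [Nat.cast_ofNat, Nat.reduceSub, pow_one]
  ring

/-- A smooth solution of the Kawahara equation on the half-strip `(0, ∞) × (0, L)` for times in
`[0, T]`, vanishing to first order at `x = 0` and vanishing at `y = 0, L`. The derivatives
`∂_x^i ∂_y^j u` of parabolic order `i + 2 j ≤ 5` are square-integrable uniformly in time. -/
structure IsRegularKawaharaSolution (L T : ℝ) (u : ℝ → ℝ × ℝ → ℝ) : Prop where
  smooth : ContDiff ℝ ∞ (Function.uncurry u)
  equation : ∀ t ∈ Icc 0 T, ∀ p ∈ halfStrip L,
    deriv (fun s => u s p) t + pdx (u t) p + u t p * pdx (u t) p +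
      pd 3 0 (u t) p + pd 1 2 (u t) p - pd 5 0 (u t) p = 0
  left : ∀ t ∈ Icc 0 T, ∀ y ∈ Ioo 0 L, u t (0, y) = 0 ∧ pdx (u t) (0, y) = 0
  lateral : ∀ t ∈ Icc 0 T, ∀ x > 0, u t (x, 0) = 0 ∧ u t (x, L) = 0
  integrable_sq : ∀ i j, i + 2 * j ≤ 5 → ∀ t ∈ Icc 0 T,
    IntegrableOn (fun p => pd i j (u t) p ^ 2) (halfStrip L)
  integral_sq_le : ∀ i j, i + 2 * j ≤ 5 → ∃ C, ∀ t ∈ Icc 0 T,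
    ∫ p in halfStrip L, pd i j (u t) p ^ 2 ≤ C

namespace IsRegularKawaharaSolution

variable {L T : ℝ} {u : ℝ → ℝ × ℝ → ℝ}

local notation "U" => Function.uncurry u

theorem smooth_slice (h : IsRegularKawaharaSolution L T u) (t : ℝ) : ContDiff ℝ ∞ (u t) :=
  h.smooth.comp (contDiff_const.prodMk contDiff_id)

theorem pd_eq (h : IsRegularKawaharaSolution L T u) (i j : ℕ) (t : ℝ) :
    pd i j (u t) = fun p => Dx^[i] (Dy^[j] U) (t, p) :=
  pd_slice h.smooth i j t

theorem exists_bound (h : IsRegularKawaharaSolution L T u) :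
    ∃ M, ∀ t ∈ Icc 0 T, ∀ p ∈ halfStrip L, |u t p| ≤ M := by
  obtain ⟨C₀₀, h₀₀⟩ := h.integral_sq_le 0 0 (by norm_num)
  obtain ⟨C₁₀, h₁₀⟩ := h.integral_sq_le 1 0 (by norm_num)
  obtain ⟨C₀₁, h₀₁⟩ := h.integral_sq_le 0 1 (by norm_num)
  obtain ⟨C₁₁, h₁₁⟩ := h.integral_sq_le 1 1 (by norm_num)
  refine ⟨√(C₀₀ + C₁₀ + (C₀₁ + C₁₁)), fun t ht p hp => abs_le_sqrt ?_⟩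
  have i₀₀ := h.integrable_sq 0 0 (by norm_num) t ht
  have i₁₀ := h.integrable_sq 1 0 (by norm_num) t ht
  have i₀₁ := h.integrable_sq 0 1 (by norm_num) t ht
  have i₁₁ := h.integrable_sq 1 1 (by norm_num) t ht
  have hint := (i₀₀.add i₁₀).add (i₀₁.add i₁₁)
  refine (sq_le_integral_of_eq_zero_on_boundary ((h.smooth_slice t).of_le ENat.LEInfty.out)
    (fun y hy => (h.left t ht y hy).1) (fun x hx => (h.lateral t ht x hx).1) hint hp).trans ?_
  calc _ = (∫ p in halfStrip L, pd 0 0 (u t) p ^ 2) +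
          (∫ p in halfStrip L, pd 1 0 (u t) p ^ 2) +
          ((∫ p in halfStrip L, pd 0 1 (u t) p ^ 2) +
          ∫ p in halfStrip L, pd 1 1 (u t) p ^ 2) :=
        (integral_add (i₀₀.add i₁₀) (i₀₁.add i₁₁)).trans
          (congrArg₂ _ (integral_add i₀₀ i₁₀) (integral_add i₀₁ i₁₁))
    _ ≤ _ := add_le_add (add_le_add (h₀₀ t ht) (h₁₀ t ht)) (add_le_add (h₀₁ t ht) (h₁₁ t ht))

theorem memLp_deriv (h : IsRegularKawaharaSolution L T u) (i j : ℕ) (hij : i + 2 * j ≤ 5) :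
    MemLp (Dx^[i] (Dy^[j] U)) 2 (volume.restrict (Icc 0 T ×ˢ halfStrip L)) := by
  obtain ⟨C, hC⟩ := h.integral_sq_le i j hij
  have hcont : Continuous (Dx^[i] (Dy^[j] U)) :=
    (smooth_iterate_dirDeriv (smooth_iterate_dirDeriv h.smooth _ j) _ i).continuous
  rw [Measure.volume_eq_prod, ← Measure.prod_restrict]
  refine memLp_two_prod_of_integral_sq_le (C := C) hcont.aestronglyMeasurable ?_ ?_
  · filter_upwards [ae_restrict_mem measurableSet_Icc] with t ht
    simpa only [h.pd_eq, IntegrableOn] using h.integrable_sq i j hij t ht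
  · filter_upwards [ae_restrict_mem measurableSet_Icc] with t ht
    simpa only [h.pd_eq] using hC t ht

theorem memLp_top (h : IsRegularKawaharaSolution L T u) :
    MemLp U ∞ (volume.restrict (Icc 0 T ×ˢ halfStrip L)) := by
  obtain ⟨M, hM⟩ := h.exists_bound
  refine memLp_top_of_bound h.smooth.continuous.aestronglyMeasurable M ?_
  filter_upwards [ae_restrict_mem
    (measurableSet_Icc.prod (measurableSet_Ioi.prod measurableSet_Ioo))] with q hq
  exact hM q.1 hq.1 q.2 hq.2

theorem equation_at (h : IsRegularKawaharaSolution L T u) {q : ℝ × ℝ × ℝ}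
    (hq : q ∈ Icc 0 T ×ˢ halfStrip L) :
    Dt U q + Dx U q + U q * Dx U q + Dx^[3] U q + Dx (Dy^[2] U) q - Dx^[5] U q = 0 := by
  have hDt : deriv (fun s => u s q.2) q.1 = Dt U q :=
    (hasDerivAt_Dt (h.smooth.differentiable (by simp)) q.1 q.2.1 q.2.2).deriv
  have hDx : pdx (u q.1) q.2 = Dx U q := congrFun (h.pd_eq 1 0 q.1) q.2
  have heq := h.equation q.1 hq.1 q.2 hq.2
  simp only [hDt, hDx, h.pd_eq] at heq
  exact heq

theorem memLp_mul (h : IsRegularKawaharaSolution L T u) {f : ℝ × ℝ × ℝ → ℝ}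
    (hf : MemLp f 2 (volume.restrict (Icc 0 T ×ˢ halfStrip L))) :
    MemLp (fun q => U q * f q) 2 (volume.restrict (Icc 0 T ×ˢ halfStrip L)) :=
  hf.mul' h.memLp_top

theorem memLp_Dt (h : IsRegularKawaharaSolution L T u) :
    MemLp (Dt U) 2 (volume.restrict (Icc 0 T ×ˢ halfStrip L)) := by
  have hDx := h.memLp_deriv 1 0 (by norm_num)
  have hsum := ((((h.memLp_deriv 5 0 (by norm_num)).sub
    (h.memLp_deriv 3 0 (by norm_num))).sub
    (h.memLp_deriv 1 2 (by norm_num))).sub hDx).sub (h.memLp_mul hDx)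
  refine hsum.ae_eq ?_
  filter_upwards [ae_restrict_mem
    (measurableSet_Icc.prod (measurableSet_Ioi.prod measurableSet_Ioo))] with q hq
  have heq := h.equation_at hq
  simp only [Pi.sub_apply, Function.iterate_zero, Function.iterate_one, id]
  linear_combination -heq

theorem memLp_energyGradient (h : IsRegularKawaharaSolution L T u) :
    MemLp (energyGradient U) 2 (volume.restrict (Icc 0 T ×ˢ halfStrip L)) := by
  have hU := h.memLp_deriv 0 0 (by norm_num)
  have hsum := (((h.memLp_deriv 4 0 (by norm_num)).sub
    (h.memLp_deriv 2 0 (by norm_num))).sub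
    (h.memLp_deriv 0 2 (by norm_num))).sub ((h.memLp_mul hU).const_mul (1 / 2))
  refine hsum.ae_eq (.of_forall fun q => ?_)
  simp only [Pi.sub_apply, energyGradient, Function.iterate_zero, id]
  ring

theorem integrableOn_secondOrderFlux (h : IsRegularKawaharaSolution L T u) :
    IntegrableOn (secondOrderFlux U) (Icc 0 T ×ˢ halfStrip L) :=
  ((h.memLp_deriv 2 0 (by norm_num)).integrable_mul h.memLp_Dt).const_mul 2

theorem integrableOn_longitudinalFlux (h : IsRegularKawaharaSolution L T u) :
    IntegrableOn (longitudinalFlux U) (Icc 0 T ×ˢ halfStrip L) := by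
  have hU := h.memLp_deriv 0 0 (by norm_num)
  have hx := h.memLp_deriv 1 0 (by norm_num)
  have hxx := h.memLp_deriv 2 0 (by norm_num)
  have hxxx := h.memLp_deriv 3 0 (by norm_num)
  have hy := h.memLp_deriv 0 1 (by norm_num)
  have hcube : Integrable (fun q => (1 / 3) * U q ^ 3)
      (volume.restrict (Icc 0 T ×ˢ halfStrip L)) := by
    refine ((hU.integrable_mul (h.memLp_mul hU)).const_mul (1 / 3)).congr (.of_forall fun q => ?_)
    simp only [Pi.mul_apply, Function.iterate_zero, id]
    ring
  exact (((((((hx.sub (hxxx.const_mul 2)).integrable_mul h.memLp_Dt).const_mul 2).add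
    h.memLp_energyGradient.integrable_sq).sub ((hx.integrable_mul hxxx).const_mul 2)).add
    hxx.integrable_sq).add hx.integrable_sq).sub hy.integrable_sq |>.add hcube

theorem integrableOn_cube (h : IsRegularKawaharaSolution L T u) {t : ℝ} (ht : t ∈ Icc 0 T) :
    IntegrableOn (fun p => u t p ^ 3) (halfStrip L) := by
  obtain ⟨M, hM⟩ := h.exists_bound
  refine ((h.integrable_sq 0 0 (by norm_num) t ht).const_mul M).mono'
    ((h.smooth_slice t).continuous.pow 3).aestronglyMeasurable ?_
  filter_upwards [ae_restrict_mem (measurableSet_Ioi.prod measurableSet_Ioo)] with p hp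
  calc ‖u t p ^ 3‖ = |u t p| * u t p ^ 2 := by
        rw [Real.norm_eq_abs, pow_succ', abs_mul, abs_sq]
    _ ≤ M * u t p ^ 2 := mul_le_mul_of_nonneg_right (hM t ht p hp) (sq_nonneg _)

theorem energyDensity_eq (h : IsRegularKawaharaSolution L T u) (t : ℝ) :
    (fun p => energyDensity U (t, p)) = fun p =>
      pd 2 0 (u t) p ^ 2 + pdx (u t) p ^ 2 + pdy (u t) p ^ 2 - (1 / 3) * u t p ^ 3 := by
  have hDx : pdx (u t) = fun p => Dx U (t, p) := h.pd_eq 1 0 t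
  have hDy : pdy (u t) = fun p => Dy U (t, p) := h.pd_eq 0 1 t
  simp only [h.pd_eq, hDx, hDy]
  rfl

theorem integrableOn_quadratic (h : IsRegularKawaharaSolution L T u) {t : ℝ} (ht : t ∈ Icc 0 T) :
    IntegrableOn (fun p => pd 2 0 (u t) p ^ 2 + pdx (u t) p ^ 2 + pdy (u t) p ^ 2)
      (halfStrip L) :=
  ((h.integrable_sq 2 0 (by norm_num) t ht).add (h.integrable_sq 1 0 (by norm_num) t ht)).add
    (h.integrable_sq 0 1 (by norm_num) t ht)

theorem inflow_nonneg (h : IsRegularKawaharaSolution L T u) {t y : ℝ} (ht : t ∈ Ioo 0 T)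
    (hy : y ∈ Ioo 0 L) :
    0 ≤ Dx (secondOrderFlux U) (t, 0, y) + longitudinalFlux U (t, 0, y) := by
  have hU := h.smooth
  have hdiff {f : ℝ × ℝ × ℝ → ℝ} (hf : ContDiff ℝ ∞ f) : Differentiable ℝ f :=
    hf.differentiable (by simp)
  have u_zero (s : ℝ) (hs : s ∈ Ioo 0 T) (z : ℝ) (hz : z ∈ Ioo 0 L) : U (s, 0, z) = 0 :=
    (h.left s (Ioo_subset_Icc_self hs) z hz).1
  have ux_zero (s : ℝ) (hs : s ∈ Ioo 0 T) : Dx U (s, 0, y) = 0 :=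
    (congrFun (h.pd_eq 1 0 s) (0, y)).symm.trans (h.left s (Ioo_subset_Icc_self hs) y hy).2
  have uy_zero : Dy U (t, 0, y) = 0 :=
    eq_zero_of_hasDerivAt_of_eqOn_zero isOpen_Ioo hy (hasDerivAt_Dy (hdiff hU) t 0 y) (u_zero t ht)
  have ut_zero : Dt U (t, 0, y) = 0 :=
    eq_zero_of_hasDerivAt_of_eqOn_zero isOpen_Ioo ht (hasDerivAt_Dt (hdiff hU) t 0 y)
      fun s hs => u_zero s hs y hy
  have uxt_zero : Dx (Dt U) (t, 0, y) = 0 := by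
    rw [show Dx (Dt U) = Dt (Dx U) from dirDeriv_comm (hU.of_le ENat.LEInfty.out) _ _]
    exact eq_zero_of_hasDerivAt_of_eqOn_zero isOpen_Ioo ht
      (hasDerivAt_Dt (hdiff (by fun_prop)) t 0 y) ux_zero
  have hDxP : Dx (secondOrderFlux U) (t, 0, y) = 0 := by
    unfold secondOrderFlux
    simp (disch := first | fun_prop | (apply hdiff; fun_prop)) only [dirDeriv_mul, dirDeriv_const,
      ut_zero, uxt_zero, mul_zero, add_zero]
  have hQ : longitudinalFlux U (t, 0, y) =
      energyGradient U (t, 0, y) ^ 2 + Dx^[2] U (t, 0, y) ^ 2 := by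
    rw [longitudinalFlux, ut_zero, ux_zero t ht, uy_zero, u_zero t ht y hy]
    ring
  rw [hDxP, hQ]
  positivity

theorem transverseFlux_eq_zero (h : IsRegularKawaharaSolution L T u) {t x y : ℝ}
    (ht : t ∈ Ioo 0 T) (hx : 0 < x)
    (hu : ∀ s ∈ Icc 0 T, ∀ z > 0, u s (z, y) = 0) : transverseFlux U (t, x, y) = 0 := by
  have hdiff : Differentiable ℝ U := h.smooth.differentiable (by simp)
  have ut_zero : Dt U (t, x, y) = 0 :=
    eq_zero_of_hasDerivAt_of_eqOn_zero isOpen_Ioo ht (hasDerivAt_Dt hdiff t x y)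
      fun s hs => hu s (Ioo_subset_Icc_self hs) x hx
  have ux_zero : Dx U (t, x, y) = 0 :=
    eq_zero_of_hasDerivAt_of_eqOn_zero isOpen_Ioi hx (hasDerivAt_Dx hdiff t x y)
      (hu t (Ioo_subset_Icc_self ht))
  rw [transverseFlux, ut_zero, ux_zero, add_zero, mul_zero, mul_zero]

theorem integrableOn_energyDensity (h : IsRegularKawaharaSolution L T u) {t : ℝ}
    (ht : t ∈ Icc 0 T) : IntegrableOn (fun p => energyDensity U (t, p)) (halfStrip L) := by
  rw [h.energyDensity_eq t]
  exact (h.integrableOn_quadratic ht).sub ((h.integrableOn_cube ht).const_mul (1 / 3))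

theorem integral_energyDensity (h : IsRegularKawaharaSolution L T u) {t : ℝ}
    (ht : t ∈ Icc 0 T) :
    ∫ p in halfStrip L, energyDensity U (t, p) =
      (∫ p in halfStrip L, (pd 2 0 (u t) p ^ 2 + pdx (u t) p ^ 2 + pdy (u t) p ^ 2)) -
        (1 / 3) * ∫ p in halfStrip L, u t p ^ 3 := by
  rw [h.energyDensity_eq t, integral_sub (h.integrableOn_quadratic ht)
    ((h.integrableOn_cube ht).const_mul (1 / 3)), integral_const_mul]

end IsRegularKawaharaSolution

theorem kawahara_energy_nonincreasing_general {L T : ℝ} (hL : 0 < L) {u : ℝ → ℝ × ℝ → ℝ}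
    (h : IsRegularKawaharaSolution L T u) :
    AntitoneOn
      (fun t =>
        (∫ p in halfStrip L, (pd 2 0 (u t) p ^ 2 + pdx (u t) p ^ 2 + pdy (u t) p ^ 2)) -
          (1 / 3) * ∫ p in halfStrip L, u t p ^ 3)
      (Icc 0 T) := by
  intro a ha b hb hab
  have hsub : Ioo a b ⊆ Ioo 0 T := Ioo_subset_Ioo ha.1 hb.2
  have hsub' : Ioo a b ⊆ Icc 0 T := hsub.trans Ioo_subset_Icc_self
  have hsmooth {n : WithTop ℕ∞} [ENat.LEInfty n] {f : ℝ × ℝ × ℝ → ℝ} (hf : ContDiff ℝ ∞ f) :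
      ContDiff ℝ n f :=
    hf.of_le ENat.LEInfty.out
  simp only [← h.integral_energyDensity ha, ← h.integral_energyDensity hb]
  refine integral_le_of_balance_law hab hL.le (hsmooth (smooth_energyDensity h.smooth))
    (hsmooth (smooth_secondOrderFlux h.smooth)) (hsmooth (smooth_longitudinalFlux h.smooth))
    (hsmooth (smooth_transverseFlux h.smooth))
    (fun t ht x hx y hy => energy_balance h.smooth (h.equation_at ⟨hsub' ht, hx, hy⟩))
    (fun t ht y hy => h.inflow_nonneg (hsub ht) hy) (fun t ht x hx => ?_)
    (h.integrableOn_energyDensity ha) (h.integrableOn_energyDensity hb)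
    (h.integrableOn_secondOrderFlux.mono_set (prod_mono hsub' subset_rfl))
    (h.integrableOn_longitudinalFlux.mono_set (prod_mono hsub' subset_rfl))
  rw [h.transverseFlux_eq_zero (hsub ht) hx fun s hs z hz => (h.lateral s hs z hz).1,
    h.transverseFlux_eq_zero (hsub ht) hx fun s hs z hz => (h.lateral s hs z hz).2]

end Kawahara

/-- Proposition 6.5: for regular solutions of the 2D Kawahara equation with
linear transport term `u_x` on the half-strip `D = (0,∞) × (0,L)`, the modified
energy `‖u_{xx}‖² + ‖∇u‖² − (1/3)∫_D u³` is nonincreasing in time. -/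
theorem kawahara_energy_nonincreasing (L T : ℝ) (hL : 0 < L) (hT : 0 < T)
    (D : Set (ℝ × ℝ)) (hD : D = Set.Ioi (0:ℝ) ×ˢ Set.Ioo 0 L)
    (u : ℝ → ℝ × ℝ → ℝ)
    (hu : ContDiff ℝ (⊤ : ℕ∞) (Function.uncurry u))
    (heq : ∀ t ∈ Set.Icc (0:ℝ) T, ∀ p ∈ D,
      deriv (fun s => u s p) t + pdx (u t) p + u t p * pdx (u t) p +
        pd 3 0 (u t) p + pd 1 2 (u t) p - pd 5 0 (u t) p = 0)
    (hbc1 : ∀ t ∈ Set.Icc (0:ℝ) T, ∀ y ∈ Set.Ioo (0:ℝ) L,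
      u t (0, y) = 0 ∧ pdx (u t) (0, y) = 0)
    (hbc2 : ∀ t ∈ Set.Icc (0:ℝ) T, ∀ x > (0:ℝ),
      u t (x, 0) = 0 ∧ u t (x, L) = 0)
    (hdec : ∀ i j : ℕ, i + j ≤ 5 →
      ∀ ε > 0, ∃ M : ℝ, ∀ x ≥ M, ∀ y : ℝ, ∀ t ∈ Set.Icc (0:ℝ) T,
        |pd i j (u t) (x, y)| ≤ ε)
    (hint : ∀ i j : ℕ, i + j ≤ 5 →
      (∀ t ∈ Set.Icc (0:ℝ) T, IntegrableOn (fun p => (pd i j (u t) p) ^ 2) D) ∧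
        ∃ C : ℝ, ∀ t ∈ Set.Icc (0:ℝ) T, (∫ p in D, (pd i j (u t) p) ^ 2) ≤ C) :
    AntitoneOn
      (fun t =>
        (∫ p in D, ((pd 2 0 (u t) p) ^ 2 + (pdx (u t) p) ^ 2 + (pdy (u t) p) ^ 2)) -
          (1 / 3) * ∫ p in D, (u t p) ^ 3)
      (Set.Icc (0:ℝ) T) := by
  subst hD
  exact kawahara_energy_nonincreasing_general hL ⟨hu, heq, hbc1, hbc2,
    fun i j hij => (hint i j (by lia)).1, fun i j hij => (hint i j (by lia)).2⟩
end
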